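/- arXiv:1605.05131 — 5 statements merged into one kernel-verified Lean document; each statement's English description precedes it below -/
import Mathlib

section
/- Every n×n matrix over an arbitrary field with trace zero is the sum of four square-zero matrices. -/
open Module

/-- An endomorphism that is odd for a `ℤ/2`-grading `V = V₀ ⊕ V₁` is the sum of two square-zero
endomorphisms. -/
theorem LinearMap.exists_sq_eq_zero_add_of_isCompl_of_map_le {F V : Type*} [Field F]
    [AddCommGroup V] [Module F V] {T : End F V} {V₀ V₁ : Submodule F V} (hc : IsCompl V₀ V₁)
    (h₀ : V₀.map T ≤ V₁) (h₁ : V₁.map T ≤ V₀) :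
    ∃ B C : End F V, B ^ 2 = 0 ∧ C ^ 2 = 0 ∧ T = B + C := by
  have key : ∀ {U W : Submodule F V} (h : IsCompl U W), U.map T ≤ W →
      (T * U.projection W h) ^ 2 = 0 := by
    intro U W h hU
    ext x
    rw [pow_two]
    have : U.projection W h (T (U.projection W h x)) = 0 :=
      (Submodule.projection_apply_eq_zero_iff h).2 (hU ⟨_, Submodule.projection_apply_mem h x, rfl⟩)
    simp [this]
  refine ⟨T * V₀.projection V₁ hc, T * V₁.projection V₀ hc.symm, key hc h₀, key hc.symm h₁, ?_⟩
  ext x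
  simp [← map_add, Submodule.projection_add_projection_eq_self hc x]

/-- A `ℤ/2`-grading of `V.map T` for which `T` is odd extends to such a grading of `V`. -/
theorem Submodule.exists_odd_grading_of_map {F E : Type*} [Field F]
    [AddCommGroup E] [Module F E] (T : End F E) {V W₀ W₁ : Submodule F E}
    (hV : V.map T ≤ V) (hd : W₀ ⊓ W₁ = ⊥) (hs : W₀ ⊔ W₁ = V.map T)
    (h₀ : W₀.map T ≤ W₁) (h₁ : W₁.map T ≤ W₀) :
    ∃ V₀ V₁ : Submodule F E, V₀ ⊓ V₁ = ⊥ ∧ V₀ ⊔ V₁ = V ∧ V₀.map T ≤ V₁ ∧ V₁.map T ≤ V₀ := by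
  have hW₀ : W₀ ≤ V := le_sup_left.trans (hs.le.trans hV)
  have hW₁ : W₁ ≤ V := le_sup_right.trans (hs.le.trans hV)
  obtain ⟨X, hX⟩ : ∃ X, X = V ⊓ W₀.comap T := ⟨_, rfl⟩
  obtain ⟨Y, hY⟩ : ∃ Y, Y = V ⊓ W₁.comap T := ⟨_, rfl⟩
  obtain ⟨K, hK⟩ : ∃ K, K = V ⊓ LinearMap.ker T := ⟨_, rfl⟩
  have hKX : K ≤ X := by
    rw [hK, hX]; exact inf_le_inf_left _ (LinearMap.ker_le_comap T)
  have hKY : K ≤ Y := by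
    rw [hK, hY]; exact inf_le_inf_left _ (LinearMap.ker_le_comap T)
  have hW₁X : W₁ ≤ X := hX ▸ le_inf hW₁ (Submodule.map_le_iff_le_comap.1 h₁)
  have hW₀Y : W₀ ≤ Y := hY ▸ le_inf hW₀ (Submodule.map_le_iff_le_comap.1 h₀)
  have hXY : X ⊓ Y ≤ K := by
    rintro x ⟨hx, hy⟩
    rw [hX] at hx
    rw [hY] at hy
    have : T x ∈ W₀ ⊓ W₁ := ⟨hx.2, hy.2⟩
    rw [hd, Submodule.mem_bot] at this
    rw [hK]
    exact ⟨hx.1, this⟩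
  have hVXY : V ≤ X ⊔ Y := by
    intro x hx
    have hTx : T x ∈ W₀ ⊔ W₁ := hs ▸ Submodule.mem_map_of_mem hx
    obtain ⟨a, ha, b, hb, hab⟩ := Submodule.mem_sup.1 hTx
    obtain ⟨y, hy, rfl⟩ : a ∈ V.map T := hs ▸ Submodule.mem_sup_left ha
    refine Submodule.mem_sup.2 ⟨y, hX ▸ ⟨hy, ha⟩, x - y, hY ▸ ⟨V.sub_mem hx hy, ?_⟩, by abel⟩
    have : T (x - y) = b := by rw [map_sub, ← hab]; abel
    simpa [this] using hb
  -- the kernel of `T` on the graded subspace is graded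
  have hWK : (W₀ ⊔ W₁) ⊓ K ≤ (W₀ ⊓ K) ⊔ (W₁ ⊓ K) := by
    rintro x ⟨hx, hxK⟩
    obtain ⟨a, ha, b, hb, rfl⟩ := Submodule.mem_sup.1 hx
    rw [hK] at hxK
    have hab : T a + T b = 0 := by simpa using hxK.2
    have hTa : T a ∈ W₁ := h₀ ⟨a, ha, rfl⟩
    have hTb : T b ∈ W₀ := h₁ ⟨b, hb, rfl⟩
    have hTa' : T a ∈ W₀ := by
      rw [eq_neg_of_add_eq_zero_left hab]; exact W₀.neg_mem hTb
    have hTa0 : T a = 0 := by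
      have : T a ∈ W₀ ⊓ W₁ := ⟨hTa', hTa⟩
      simpa [hd] using this
    have hTb0 : T b = 0 := by simpa [hTa0] using hab
    rw [hK]
    exact Submodule.mem_sup.2 ⟨a, ⟨ha, hW₀ ha, hTa0⟩, b, ⟨hb, hW₁ hb, hTb0⟩, rfl⟩
  obtain ⟨K', hK'd, hK's⟩ :=
    IsModularLattice.exists_disjoint_and_sup_eq (inf_le_right : (W₀ ⊔ W₁) ⊓ K ≤ K)
  have hK'K : K' ≤ K := hK's ▸ le_sup_right
  obtain ⟨V₁, hV₁i, hV₁s⟩ := IsModularLattice.exists_inf_eq_and_sup_eq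
    (le_sup_left : W₁ ≤ W₁ ⊔ K) (sup_le hW₁X hKX)
  obtain ⟨V₀, hV₀i, hV₀s⟩ := IsModularLattice.exists_inf_eq_and_sup_eq
    (sup_le_sup_left hK'K W₀ : W₀ ⊔ K' ≤ W₀ ⊔ K) (sup_le hW₀Y hKY)
  have hV₁X : V₁ ≤ X := hV₁s ▸ le_sup_right
  have hV₀Y : V₀ ≤ Y := hV₀s ▸ le_sup_right
  have hW₁V₁ : W₁ ≤ V₁ := hV₁i ▸ inf_le_right
  have hW₀V₀ : W₀ ⊔ K' ≤ V₀ := hV₀i ▸ inf_le_right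
  refine ⟨V₀, V₁, ?_, le_antisymm ?_ ?_, ?_, ?_⟩
  · rw [eq_bot_iff]
    rintro x ⟨hx₀, hx₁⟩
    have hxK : x ∈ K := hXY ⟨hV₁X hx₁, hV₀Y hx₀⟩
    have hx₁' : x ∈ W₁ := hV₁i ▸ ⟨Submodule.mem_sup_right hxK, hx₁⟩
    have hx₀' : x ∈ W₀ ⊔ K' := hV₀i ▸ ⟨Submodule.mem_sup_right hxK, hx₀⟩
    obtain ⟨a, ha, b, hb, rfl⟩ := Submodule.mem_sup.1 hx₀'
    have hbW : b ∈ W₀ ⊔ W₁ := by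
      have := (W₀ ⊔ W₁).sub_mem (Submodule.mem_sup_right hx₁') (Submodule.mem_sup_left ha)
      simpa using this
    have hb0 : b = 0 := Submodule.disjoint_def.1 hK'd b ⟨hbW, hK'K hb⟩ hb
    subst hb0
    have : a + 0 ∈ W₀ ⊓ W₁ := ⟨by simpa using ha, hx₁'⟩
    rwa [hd] at this
  · exact sup_le (hV₀Y.trans (hY ▸ inf_le_left)) (hV₁X.trans (hX ▸ inf_le_left))
  · have hKV : K ≤ V₀ ⊔ V₁ := by
      rw [← hK's]
      refine sup_le (hWK.trans (sup_le_sup ?_ ?_)) ?_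
      · exact inf_le_left.trans (le_sup_left.trans hW₀V₀)
      · exact inf_le_left.trans hW₁V₁
      · exact le_sup_right.trans (hW₀V₀.trans le_sup_left)
    refine hVXY.trans (sup_le ?_ ?_)
    · rw [← hV₁s]
      exact sup_le (sup_le (hW₁V₁.trans le_sup_right) hKV) le_sup_right
    · rw [← hV₀s]
      exact sup_le (sup_le (le_sup_left.trans (hW₀V₀.trans le_sup_left)) hKV) le_sup_left
  · exact Submodule.map_le_iff_le_comap.2
      (hV₀Y.trans (hY ▸ inf_le_right)) |>.trans hW₁V₁
  · exact Submodule.map_le_iff_le_comap.2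
      (hV₁X.trans (hX ▸ inf_le_right)) |>.trans (le_sup_left.trans hW₀V₀)

/-- A nilpotent endomorphism of a vector space is the sum of two square-zero endomorphisms. -/
theorem LinearMap.exists_sq_eq_zero_add_of_isNilpotent {F V : Type*} [Field F]
    [AddCommGroup V] [Module F V] {T : End F V} (hT : IsNilpotent T) :
    ∃ B C : End F V, B ^ 2 = 0 ∧ C ^ 2 = 0 ∧ T = B + C := by
  have grading : ∀ j k, T ^ (j + k) = 0 → ∃ V₀ V₁ : Submodule F V, V₀ ⊓ V₁ = ⊥ ∧
      V₀ ⊔ V₁ = LinearMap.range (T ^ k) ∧ V₀.map T ≤ V₁ ∧ V₁.map T ≤ V₀ := by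
    intro j
    induction j with
    | zero =>
      intro k hk
      rw [zero_add] at hk
      exact ⟨⊥, ⊥, by simp [hk]⟩
    | succ j ih =>
      intro k hk
      obtain ⟨W₀, W₁, hd, hs, h₀, h₁⟩ := ih (k + 1) (by rwa [← add_assoc, add_right_comm])
      have hr : LinearMap.range (T ^ (k + 1)) = (LinearMap.range (T ^ k)).map T := by
        rw [pow_succ', Module.End.mul_eq_comp, LinearMap.range_comp]
      refine Submodule.exists_odd_grading_of_map T ?_ hd (hs.trans hr) h₀ h₁
      rw [← hr, pow_succ, Module.End.mul_eq_comp]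
      exact LinearMap.range_comp_le_range _ _
  obtain ⟨k, hk⟩ := hT
  obtain ⟨V₀, V₁, hd, hs, h₀, h₁⟩ := grading k 0 hk
  refine LinearMap.exists_sq_eq_zero_add_of_isCompl_of_map_le
    ⟨disjoint_iff.2 hd, codisjoint_iff.2 ?_⟩ h₀ h₁
  rw [hs, pow_zero, Module.End.one_eq_id, LinearMap.range_id]

/-- The projection onto the kernel of a linear form `f` along a vector `v` with `f v = 1`. -/
def LinearMap.projKer {F V : Type*} [Field F] [AddCommGroup V] [Module F V]
    (f : Dual F V) (v : V) (hv : f v = 1) : V →ₗ[F] LinearMap.ker f :=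
  (LinearMap.id - f.smulRight v).codRestrict _ fun x ↦ by simp [hv]

theorem LinearMap.coe_projKer {F V : Type*} [Field F] [AddCommGroup V] [Module F V]
    (f : Dual F V) (v : V) (hv : f v = 1) (x : V) :
    (LinearMap.projKer f v hv x : V) = x - f x • v := rfl

/-- The compression of an endomorphism to the kernel of `f` along `v`. -/
def LinearMap.compressKer {F V : Type*} [Field F] [AddCommGroup V] [Module F V]
    (T : End F V) (f : Dual F V) (v : V) (hv : f v = 1) : End F (LinearMap.ker f) :=
  LinearMap.projKer f v hv ∘ₗ T ∘ₗ (LinearMap.ker f).subtype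

theorem LinearMap.coe_compressKer {F V : Type*} [Field F] [AddCommGroup V] [Module F V]
    (T : End F V) (f : Dual F V) (v : V) (hv : f v = 1) (x : LinearMap.ker f) :
    (LinearMap.compressKer T f v hv x : V) = T x - f (T x) • v := rfl

theorem LinearMap.trace_compressKer {F V : Type*} [Field F] [AddCommGroup V] [Module F V]
    [FiniteDimensional F V] (T : End F V) (f : Dual F V) (v : V) (hv : f v = 1) :
    LinearMap.trace F _ (LinearMap.compressKer T f v hv) = LinearMap.trace F V T - f (T v) := by
  rw [LinearMap.compressKer, LinearMap.trace_comp_comm', LinearMap.comp_assoc,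
    ← LinearMap.trace_smulRight f (T v), ← map_sub]
  congr 1
  ext x
  simp [LinearMap.coe_projKer]

/-- If the compression of `T` to the kernel of `f` along `v` is a sum of two nilpotent
endomorphisms and the corresponding corner `f (T v)` of `T` vanishes, then `T` is a sum of two
nilpotent endomorphisms. -/
theorem LinearMap.exists_isNilpotent_add_of_compressKer {F V : Type*} [Field F] [AddCommGroup V]
    [Module F V] (T : End F V) (f : Dual F V) (v : V) (hv : f v = 1) (hTv : f (T v) = 0)
    (h : ∃ N₁ N₂, IsNilpotent N₁ ∧ IsNilpotent N₂ ∧ LinearMap.compressKer T f v hv = N₁ + N₂) :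
    ∃ M₁ M₂ : End F V, IsNilpotent M₁ ∧ IsNilpotent M₂ ∧ T = M₁ + M₂ := by
  obtain ⟨N₁, N₂, ⟨k, hk⟩, ⟨l, hl⟩, hN⟩ := h
  obtain ⟨π, hπdef⟩ : ∃ π, π = LinearMap.projKer f v hv := ⟨_, rfl⟩
  have hπ : ∀ x, (π x : V) = x - f x • v := fun x ↦ by rw [hπdef, LinearMap.coe_projKer]
  have hπv : π v = 0 := Subtype.ext (by simp [hπ, hv])
  have hπK : ∀ y : LinearMap.ker f, π y = y := fun y ↦ Subtype.ext (by simp [hπ])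
  obtain ⟨M₁, hM₁⟩ : ∃ M₁ : End F V, ∀ x, M₁ x = N₁ (π x) + f (T (π x)) • v :=
    ⟨(LinearMap.ker f).subtype ∘ₗ N₁ ∘ₗ π +
      (f ∘ₗ T ∘ₗ (LinearMap.ker f).subtype ∘ₗ π).smulRight v, fun x ↦ by simp⟩
  obtain ⟨M₂, hM₂⟩ : ∃ M₂ : End F V, ∀ x, M₂ x = N₂ (π x) + f x • T v :=
    ⟨(LinearMap.ker f).subtype ∘ₗ N₂ ∘ₗ π + f.smulRight (T v), fun x ↦ by simp⟩
  refine ⟨M₁, M₂, ⟨k + 1, ?_⟩, ⟨l + 1, ?_⟩, ?_⟩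
  · have hpow : ∀ j x, π ((M₁ ^ j) x) = (N₁ ^ j) (π x) := by
      intro j
      induction j with
      | zero => simp
      | succ j ih =>
        intro x
        rw [pow_succ', pow_succ', Module.End.mul_apply, Module.End.mul_apply, ← ih, hM₁, map_add,
          map_smul, hπv, smul_zero, add_zero, hπK]
    ext x
    rw [pow_succ', Module.End.mul_apply, hM₁, hpow, hk]
    simp
  · have hpow : ∀ j (y : LinearMap.ker f), (M₂ ^ j) y = (N₂ ^ j) y := by
      intro j
      induction j with
      | zero => simp
      | succ j ih =>
        intro y
        rw [pow_succ', pow_succ', Module.End.mul_apply, Module.End.mul_apply, ih, hM₂, hπK]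
        simp
    ext x
    have hx : M₂ x ∈ LinearMap.ker f := by simp [hM₂, hTv]
    rw [pow_succ, Module.End.mul_apply, show M₂ x = (⟨M₂ x, hx⟩ : LinearMap.ker f) from rfl, hpow,
      hl]
    simp
  · ext x
    have hNx := congrArg Subtype.val (LinearMap.congr_fun hN (π x))
    rw [LinearMap.coe_compressKer, LinearMap.add_apply, Submodule.coe_add] at hNx
    have hTx : T x = T (π x) + f x • T v := by rw [hπ]; simp
    rw [LinearMap.add_apply, hM₁, hM₂, hTx, add_add_add_comm, ← hNx]
    abel

theorem Submodule.exists_dual_eq_one_of_notMem {F V : Type*} [Field F] [AddCommGroup V]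
    [Module F V] {p : Submodule F V} {v : V} (hv : v ∉ p) :
    ∃ f : Dual F V, f v = 1 ∧ ∀ x ∈ p, f x = 0 := by
  obtain ⟨f, hf, hp⟩ := Submodule.exists_dual_map_eq_bot_of_notMem hv inferInstance
  refine ⟨(f v)⁻¹ • f, by simp [hf], fun x hx ↦ ?_⟩
  have : f x ∈ p.map f := ⟨x, hx, rfl⟩
  rw [hp, Submodule.mem_bot] at this
  simp [this]

/-- A trace-zero endomorphism moving some vector off its line has a compression to a hyperplane
which is zero or not scalar, with vanishing complementary corner. -/
theorem LinearMap.exists_compressKer_eq_zero_or_forall_ne_smul {F V : Type*} [Field F]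
    [AddCommGroup V] [Module F V] [FiniteDimensional F V] {T : End F V}
    (hT : LinearMap.trace F V T = 0) {v : V} (hli : LinearIndependent F ![v, T v]) :
    ∃ (f : Dual F V) (hv : f v = 1), f (T v) = 0 ∧
      (LinearMap.compressKer T f v hv = 0 ∨ ∀ a : F, LinearMap.compressKer T f v hv ≠ a • 1) := by
  have hTv : ∀ a : F, T v ≠ a • v := by
    intro a h
    have := LinearIndependent.pair_iff.1 hli a (-1) (by simp [h])
    simp at this
  have hv : v ∉ Submodule.span F {T v} := by
    rw [Submodule.mem_span_singleton]
    rintro ⟨a, ha⟩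
    have := LinearIndependent.pair_iff.1 hli (-1) a (by simp [ha])
    simp at this
  obtain ⟨f, hfv, hf⟩ := Submodule.exists_dual_eq_one_of_notMem hv
  have hfT : f (T v) = 0 := hf _ (Submodule.mem_span_singleton_self _)
  by_cases hns : ∀ a : F, LinearMap.compressKer T f v hfv ≠ a • 1
  · exact ⟨f, hfv, hfT, Or.inr hns⟩
  push Not at hns
  obtain ⟨a, ha⟩ := hns
  have haf : ∀ x, f x = 0 → T x - f (T x) • v = a • x := by
    intro x hx
    simpa [LinearMap.coe_compressKer] using
      congrArg Subtype.val (LinearMap.congr_fun ha ⟨x, hx⟩)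
  by_cases htop : ∀ w, w ∈ Submodule.span F {v, T v}
  · refine ⟨f, hfv, hfT, Or.inl ?_⟩
    have h1 : finrank F (LinearMap.ker f) = 1 := by
      refine finrank_eq_one ⟨T v, hfT⟩ ?_ ?_
      · intro h
        exact hTv 0 (by simpa using congrArg Subtype.val h)
      · rintro ⟨w, hw⟩
        obtain ⟨b, c, rfl⟩ := Submodule.mem_span_pair.1 (htop w)
        have hb : b = 0 := by simpa [hfv, hfT] using hw
        exact ⟨c, Subtype.ext (by simp [hb])⟩
    have htr := LinearMap.trace_compressKer T f v hfv
    rw [hT, hfT, ha, map_smul, LinearMap.trace_one, h1] at htr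
    have ha0 : a = 0 := by simpa using htr
    rw [ha, ha0, zero_smul]
  · push Not at htop
    obtain ⟨w, hw⟩ := htop
    obtain ⟨h, hhw, hh⟩ := Submodule.exists_dual_eq_one_of_notMem hw
    have hhv : h v = 0 := hh _ (Submodule.subset_span (by simp))
    have hhT : h (T v) = 0 := hh _ (Submodule.subset_span (by simp))
    have hgv : (f + h) v = 1 := by simp [hfv, hhv]
    refine ⟨f + h, hgv, by simp [hfT, hhT], Or.inr fun b hb ↦ ?_⟩
    have hbg : ∀ x, f x + h x = 0 → ∃ c : F, T x - c • v = b • x := by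
      intro x hx
      exact ⟨(f + h) (T x), congrArg Subtype.val (LinearMap.congr_fun hb ⟨x, hx⟩)⟩
    have hrel : ∀ y, f y = 0 → ∃ c : F, (a - b) • y + c • v = h y • T v := by
      intro y hy
      obtain ⟨c, hc⟩ := hbg (y - h y • v) (by simp [hy, hfv, hhv])
      refine ⟨f (T y) - c + b * h y, ?_⟩
      have hay := haf y hy
      rw [map_sub, map_smul] at hc
      linear_combination (norm := module) hc - hay
    have hab : a - b = 0 := by
      by_contra hne
      obtain ⟨c, hc⟩ := hrel (T v) hfT
      rw [hhT, zero_smul] at hc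
      exact hne (LinearIndependent.pair_iff.1 hli c (a - b) (by rw [add_comm, hc])).2
    obtain ⟨c, hc⟩ := hrel (w - f w • v) (by simp [hfv])
    rw [hab, zero_smul, zero_add, map_sub, map_smul, hhw, hhv, smul_zero, sub_zero, one_smul] at hc
    exact hTv c hc.symm

/-- A trace-zero endomorphism which is zero or not scalar is the sum of two nilpotent
endomorphisms. -/
theorem LinearMap.exists_isNilpotent_add_of_trace_eq_zero {F : Type*} [Field F] (n : ℕ) :
    ∀ {V : Type*} [AddCommGroup V] [Module F V] [FiniteDimensional F V],
      finrank F V = n → ∀ {T : End F V}, LinearMap.trace F V T = 0 →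
      (T = 0 ∨ ∀ a : F, T ≠ a • 1) →
      ∃ N₁ N₂ : End F V, IsNilpotent N₁ ∧ IsNilpotent N₂ ∧ T = N₁ + N₂ := by
  induction n using Nat.strong_induction_on with
  | _ n ih =>
    intro V _ _ _ hn T hT hT'
    rcases hT' with rfl | hns
    · exact ⟨0, 0, .zero, .zero, by simp⟩
    obtain ⟨v, hv⟩ : ∃ v, LinearIndependent F ![v, T v] := by
      by_contra! h
      obtain ⟨a, ha⟩ := LinearMap.exists_eq_smul_id_of_forall_notLinearIndependent h
      exact hns a ha
    obtain ⟨f, hfv, hfT, hc⟩ := LinearMap.exists_compressKer_eq_zero_or_forall_ne_smul hT hv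
    refine LinearMap.exists_isNilpotent_add_of_compressKer T f v hfv hfT ?_
    refine ih _ ?_ rfl (by rw [LinearMap.trace_compressKer, hT, hfT, sub_zero]) hc
    rw [← hn]
    refine Submodule.finrank_lt fun h ↦ ?_
    have : v ∈ LinearMap.ker f := h ▸ Submodule.mem_top
    simp [hfv] at this

/-- An element of a ring is a sum of four square-zero elements. -/
def IsSumFourSquareZero {R : Type*} [Ring R] (a : R) : Prop :=
  ∃ b c d e : R, b ^ 2 = 0 ∧ c ^ 2 = 0 ∧ d ^ 2 = 0 ∧ e ^ 2 = 0 ∧ a = b + c + d + e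

theorem IsSumFourSquareZero.map {R S : Type*} [Ring R] [Ring S] (φ : R →+* S) {a : R}
    (h : IsSumFourSquareZero a) : IsSumFourSquareZero (φ a) := by
  obtain ⟨b, c, d, e, hb, hc, hd, he, rfl⟩ := h
  exact ⟨φ b, φ c, φ d, φ e, by simp [← map_pow, hb], by simp [← map_pow, hc],
    by simp [← map_pow, hd], by simp [← map_pow, he], by simp⟩

/-- If `2` is invertible, an element anticommuting with an involution is the sum of two
square-zero elements. -/
theorem exists_sq_eq_zero_add_of_anticommute {F R : Type*} [Field F] [Ring R] [Algebra F R]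
    (h2 : (2 : F) ≠ 0) {b s : R} (hs : s * s = 1) (hb : s * b = -(b * s)) :
    ∃ c d : R, c ^ 2 = 0 ∧ d ^ 2 = 0 ∧ b = c + d := by
  have hsq : ∀ t : R, t * t = 1 → t * b = -(b * t) → (b * (1 + t)) ^ 2 = 0 := by
    intro t ht htb
    calc (b * (1 + t)) ^ 2 = b * (b + t * b) * (1 + t) := by noncomm_ring
      _ = b * b * (1 - t * t) := by rw [htb]; noncomm_ring
      _ = 0 := by rw [ht, sub_self, mul_zero]
  refine ⟨(2 : F)⁻¹ • (b * (1 + s)), (2 : F)⁻¹ • (b * (1 + -s)), ?_, ?_, ?_⟩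
  · rw [smul_pow, hsq s hs hb, smul_zero]
  · rw [smul_pow, hsq (-s) (by simpa using hs) (by simp [hb]), smul_zero]
  · rw [← smul_add, ← mul_add, show (1 + s + (1 + -s) : R) = (2 : F) • 1 by
      rw [two_smul]; abel, mul_smul_comm, smul_smul, inv_mul_cancel₀ h2, mul_one, one_smul]

/-- If `n = 0` in a field of characteristic other than two, then the scalar endomorphisms of an
`n`-dimensional coordinate space are sums of four square-zero endomorphisms. -/
theorem isSumFourSquareZero_smul_one_zmod {F : Type*} [Field F] (h2 : (2 : F) ≠ 0) {n : ℕ}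
    (hn : (n : F) = 0) (a : F) : IsSumFourSquareZero (a • (1 : End F (ZMod n → F))) := by
  obtain ⟨φ, hφ⟩ : ∃ φ : ZMod n →+ F, φ 1 = 1 :=
    ⟨ZMod.lift n ⟨Int.castAddHom F, by simpa using hn⟩, by
      simpa using ZMod.lift_coe n ⟨Int.castAddHom F, by simpa using hn⟩ 1⟩
  let B : End F (ZMod n → F) := LinearMap.mulLeft F fun k ↦ a * φ k
  have hB : ∀ x k, B x k = a * φ k * x k := fun _ _ ↦ rfl
  obtain ⟨c, d, hc, hd, hcd⟩ := exists_sq_eq_zero_add_of_anticommute (F := F) h2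
    (b := B) (s := LinearMap.funLeft F F fun k ↦ -k)
    (by ext; simp [LinearMap.funLeft_apply])
    (by
      refine LinearMap.ext fun x ↦ funext fun k ↦ ?_
      simp [LinearMap.funLeft_apply, hB])
  obtain ⟨c', d', hc', hd', hcd'⟩ := exists_sq_eq_zero_add_of_anticommute (F := F) h2
    (b := a • (1 : End F (ZMod n → F)) - B) (s := LinearMap.funLeft F F fun k ↦ 1 + 1 - k)
    (by ext; simp [LinearMap.funLeft_apply])
    (by
      refine LinearMap.ext fun x ↦ funext fun k ↦ ?_
      simp only [Module.End.mul_apply, LinearMap.funLeft_apply, LinearMap.sub_apply,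
        LinearMap.smul_apply, LinearMap.neg_apply, Module.End.one_apply, Pi.sub_apply,
        Pi.smul_apply, Pi.neg_apply, hB, map_sub, map_add, hφ, smul_eq_mul]
      ring)
  exact ⟨c, d, c', d', hc, hd, hc', hd', by rw [add_assoc, ← hcd', ← hcd]; abel⟩

/-- In characteristic two, the scalar endomorphisms of `W × W` are sums of four square-zero
endomorphisms. -/
theorem isSumFourSquareZero_smul_one_prod {F W : Type*} [Field F] [AddCommGroup W] [Module F W]
    (h2 : (2 : F) = 0) (a : F) : IsSumFourSquareZero (a • (1 : End F (W × W))) := by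
  have hW : ∀ x : W, x + x = 0 := fun x ↦ by rw [← two_smul F, h2, zero_smul]
  let e : End F (W × W) := LinearMap.inl F W W ∘ₗ LinearMap.snd F W W
  let f : End F (W × W) := LinearMap.inr F W W ∘ₗ LinearMap.fst F W W
  have he : ∀ x, e x = (x.2, 0) := fun _ ↦ rfl
  have hf : ∀ x, f x = (0, x.1) := fun _ ↦ rfl
  refine ⟨e, a ^ 2 • f, a • 1 + e + a ^ 2 • f, 0, ?_, ?_, ?_, by simp, ?_⟩
  all_goals refine LinearMap.ext fun x ↦ Prod.ext ?_ ?_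
  all_goals simp [pow_two, he, hf, smul_smul, ← add_assoc]
  · linear_combination (norm := module) hW ((a * a) • x.1) + hW (a • x.2)
  · linear_combination (norm := module) hW ((a * a) • x.2) + hW ((a * (a * a)) • x.1)
  · linear_combination (norm := module) -hW x.2
  · linear_combination (norm := module) -hW ((a * a) • x.1)

/-- A scalar endomorphism with trace zero is a sum of four square-zero endomorphisms. -/
theorem isSumFourSquareZero_smul_one {F V : Type*} [Field F] [AddCommGroup V] [Module F V]
    [FiniteDimensional F V] {a : F} (ha : LinearMap.trace F V (a • 1) = 0) :
    IsSumFourSquareZero (a • (1 : End F V)) := by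
  rcases eq_or_ne a 0 with rfl | ha0
  · exact ⟨0, 0, 0, 0, by simp⟩
  have transfer : ∀ {W : Type _} [AddCommGroup W] [Module F W] (_ : W ≃ₗ[F] V),
      IsSumFourSquareZero (a • (1 : End F W)) → IsSumFourSquareZero (a • (1 : End F V)) := by
    intro W _ _ e h
    simpa using h.map (e.conjAlgEquiv F : End F W →+* End F V)
  have hn : (finrank F V : F) = 0 := by
    rw [map_smul, LinearMap.trace_one, smul_eq_mul] at ha
    exact (mul_eq_zero.1 ha).resolve_left ha0
  by_cases h2 : (2 : F) = 0
  · have : CharP F 2 := CharTwo.of_one_ne_zero_of_two_eq_zero one_ne_zero h2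
    obtain ⟨m, hm⟩ := (CharP.cast_eq_zero_iff F 2 _).1 hn
    refine transfer (LinearEquiv.ofFinrankEq ((Fin m → F) × (Fin m → F)) V ?_)
      (isSumFourSquareZero_smul_one_prod h2 a)
    simp [hm, two_mul]
  · rcases Nat.eq_zero_or_pos (finrank F V) with h0 | hpos
    · have := finrank_zero_iff.1 h0
      exact ⟨0, 0, 0, 0, by simp, by simp, by simp, by simp, Subsingleton.elim _ _⟩
    have : NeZero (finrank F V) := ⟨hpos.ne'⟩
    refine transfer (LinearEquiv.ofFinrankEq (ZMod (finrank F V) → F) V ?_)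
      (isSumFourSquareZero_smul_one_zmod h2 hn a)
    simp [ZMod.card]

/-- Every trace-zero endomorphism of a finite-dimensional vector space is a sum of four
square-zero endomorphisms. -/
theorem LinearMap.isSumFourSquareZero_of_trace_eq_zero {F V : Type*} [Field F] [AddCommGroup V]
    [Module F V] [FiniteDimensional F V] {T : End F V} (hT : LinearMap.trace F V T = 0) :
    IsSumFourSquareZero T := by
  by_cases hns : ∀ a : F, T ≠ a • 1
  · obtain ⟨N₁, N₂, h₁, h₂, rfl⟩ :=
      LinearMap.exists_isNilpotent_add_of_trace_eq_zero _ rfl hT (Or.inr hns)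
    obtain ⟨B, C, hB, hC, rfl⟩ := LinearMap.exists_sq_eq_zero_add_of_isNilpotent h₁
    obtain ⟨D, E, hD, hE, rfl⟩ := LinearMap.exists_sq_eq_zero_add_of_isNilpotent h₂
    exact ⟨B, C, D, E, hB, hC, hD, hE, (add_assoc _ _ _).symm⟩
  · push Not at hns
    obtain ⟨a, rfl⟩ := hns
    exact isSumFourSquareZero_smul_one hT

/-- Every square matrix with trace zero over a field is the sum of four
square-zero matrices. -/
theorem trace_zero_sum_four_square_zero (F : Type*) [Field F] (n : ℕ)
    (A : Matrix (Fin n) (Fin n) F) (hA : A.trace = 0) :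
    ∃ B C D E : Matrix (Fin n) (Fin n) F,
      B ^ 2 = 0 ∧ C ^ 2 = 0 ∧ D ^ 2 = 0 ∧ E ^ 2 = 0 ∧ A = B + C + D + E := by
  have hT : LinearMap.trace F _ (Matrix.toLin' A) = 0 := by rw [Matrix.trace_toLin'_eq, hA]
  let φ : End F (Fin n → F) ≃ₐ[F] Matrix (Fin n) (Fin n) F := LinearMap.toMatrixAlgEquiv'
  have h := (LinearMap.isSumFourSquareZero_of_trace_eq_zero hT).map φ.toRingEquiv.toRingHom
  have hφ : φ.toRingEquiv.toRingHom (Matrix.toLin' A) = A := LinearMap.toMatrix'_toLin' A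
  rwa [hφ] at h
end

section
/- For every n×n matrix A over an arbitrary field with trace zero, the 2n×2n block-diagonal matrix A ⊕ 0_n (with A in the top-left block and zeros elsewhere) is the sum of three square-zero matrices. -/
open Module

universe u

/-- `x` is a sum of three elements whose square is zero. -/
def IsSumThreeSquareZero {R : Type*} [Ring R] (x : R) : Prop :=
  ∃ a b c : R, a ^ 2 = 0 ∧ b ^ 2 = 0 ∧ c ^ 2 = 0 ∧ x = a + b + c

namespace IsSumThreeSquareZero

theorem map {R S : Type*} [Ring R] [Ring S] (φ : R →+* S) {x : R}
    (hx : IsSumThreeSquareZero x) : IsSumThreeSquareZero (φ x) := by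
  obtain ⟨a, b, c, ha, hb, hc, rfl⟩ := hx
  refine ⟨φ a, φ b, φ c, ?_, ?_, ?_, ?_⟩ <;> simp [← map_pow, *]

theorem of_mul_eq_mul {R : Type*} [Ring R] {x y p q : R} (hpq : p * q = 1) (hqp : q * p = 1)
    (h : p * x = y * p) (hy : IsSumThreeSquareZero y) : IsSumThreeSquareZero x := by
  obtain ⟨a, b, c, ha, hb, hc, rfl⟩ := hy
  have key : ∀ d : R, d ^ 2 = 0 → (q * d * p) ^ 2 = 0 := fun d hd => by
    calc (q * d * p) ^ 2 = q * (d * (p * q) * d) * p := by noncomm_ring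
      _ = 0 := by rw [hpq, mul_one, ← sq, hd]; simp
  refine ⟨_, _, _, key a ha, key b hb, key c hc, ?_⟩
  calc x = q * (p * x) := by rw [← mul_assoc, hqp, one_mul]
    _ = _ := by rw [h]; noncomm_ring

end IsSumThreeSquareZero

section Nilpotent

/-- In a complemented modular lattice, an element disjoint from `q` below `p` extends to a relative
complement of `q` in `p`. -/
theorem exists_relative_compl_ge {α : Type*} [Lattice α] [BoundedOrder α] [IsModularLattice α]
    [ComplementedLattice α] {i q p : α} (hi : i ≤ p) (hq : q ≤ p) (h : Disjoint i q) :
    ∃ j, i ≤ j ∧ j ≤ p ∧ Disjoint j q ∧ j ⊔ q = p := by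
  obtain ⟨c, hic, hc⟩ := h.exists_isCompl
  refine ⟨c ⊓ p, le_inf hic hi, inf_le_right, hc.disjoint.mono_left inf_le_left, ?_⟩
  rw [sup_comm, ← sup_inf_assoc_of_le _ hq, sup_comm, hc.sup_eq_top, top_inf_eq]

variable {F V : Type*} [Field F] [AddCommGroup V] [Module F V]

/-- A grading of `R.map f` for which `f` is odd extends to a grading of `R` with the same
property, provided that `f` maps `R` into itself. -/
theorem exists_odd_grading_of_map {f : End F V} {R I J : Submodule F V} (hR : R.map f ≤ R)
    (hd : Disjoint I J) (hs : I ⊔ J = R.map f) (hI : I.map f ≤ J) (hJ : J.map f ≤ I) :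
    ∃ I' J' : Submodule F V, Disjoint I' J' ∧ I' ⊔ J' = R ∧ I'.map f ≤ J' ∧ J'.map f ≤ I' := by
  have hIR : I ≤ R := le_sup_left.trans (hs.le.trans hR)
  have hJR : J ≤ R := le_sup_right.trans (hs.le.trans hR)
  rw [Submodule.map_le_iff_le_comap] at hI hJ
  have hker : ∀ S : Submodule F V, LinearMap.ker f ≤ S.comap f := fun S =>
    LinearMap.ker_le_comap f
  obtain ⟨I', hII', hI'R, hI'd, hI's⟩ := exists_relative_compl_ge (i := I)
    (q := LinearMap.ker f ⊓ J) (p := R ⊓ J.comap f) (le_inf hIR hI)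
    (le_inf (inf_le_right.trans hJR) (inf_le_left.trans (hker _)))
    (hd.mono_right inf_le_right)
  obtain ⟨J', hJJ', hJ'R, hJ'd, hJ's⟩ := exists_relative_compl_ge (i := J)
    (q := I' ⊓ LinearMap.ker f) (p := R ⊓ I.comap f) (le_inf hJR hJ)
    (le_inf (inf_le_left.trans (hI'R.trans inf_le_left)) (inf_le_right.trans (hker _)))
    (by
      rw [disjoint_iff_inf_le] at hI'd ⊢
      refine le_trans ?_ hI'd
      exact le_inf (inf_le_right.trans inf_le_left)
        (le_inf (inf_le_right.trans inf_le_right) inf_le_left))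
  refine ⟨I', J', ?_, le_antisymm ?_ ?_, ?_, ?_⟩
  · rw [Submodule.disjoint_def] at hd hJ'd ⊢
    intro x hx hx'
    refine hJ'd x hx' ⟨hx, ?_⟩
    exact hd _ (hJ'R hx').2 (hI'R hx).2
  · exact sup_le (hI'R.trans inf_le_left) (hJ'R.trans inf_le_left)
  · intro x hx
    have hfx : f x ∈ I ⊔ J := hs ▸ Submodule.mem_map_of_mem hx
    obtain ⟨a, ha, b, hb, hab⟩ := Submodule.mem_sup.mp hfx
    obtain ⟨y, hy, rfl⟩ : a ∈ R.map f := hs ▸ Submodule.mem_sup_left ha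
    have hyJ : y ∈ I' ⊔ J' := by
      have : y ∈ J' ⊔ I' ⊓ LinearMap.ker f := hJ's ▸ ⟨hy, ha⟩
      exact sup_le (c := I' ⊔ J') le_sup_right (inf_le_left.trans le_sup_left) this
    have hxy : x - y ∈ I' ⊔ J' := by
      have : x - y ∈ I' ⊔ LinearMap.ker f ⊓ J := hI's ▸ ⟨R.sub_mem hx hy, by
        simpa [← hab] using hb⟩
      exact sup_le (c := I' ⊔ J') le_sup_left ((inf_le_right.trans hJJ').trans le_sup_right) this
    simpa using Submodule.add_mem _ hxy hyJ
  · rw [Submodule.map_le_iff_le_comap]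
    exact (hI'R.trans inf_le_right).trans (Submodule.comap_mono hJJ')
  · rw [Submodule.map_le_iff_le_comap]
    exact (hJ'R.trans inf_le_right).trans (Submodule.comap_mono hII')

theorem IsNilpotent.exists_odd_grading {f : End F V} (hf : IsNilpotent f) :
    ∃ I J : Submodule F V, IsCompl I J ∧ I.map f ≤ J ∧ J.map f ≤ I := by
  obtain ⟨m, hm⟩ := hf
  have key : ∀ k ≤ m, ∃ I J : Submodule F V, Disjoint I J ∧ I ⊔ J = LinearMap.range (f ^ k) ∧
      I.map f ≤ J ∧ J.map f ≤ I := by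
    intro k hk
    induction hk using Nat.decreasingInduction with
    | self => exact ⟨⊥, ⊥, by simp [hm]⟩
    | of_succ k hk ih =>
      obtain ⟨I, J, hd, hs, hI, hJ⟩ := ih
      have hmap : (LinearMap.range (f ^ k)).map f = LinearMap.range (f ^ (k + 1)) := by
        rw [pow_succ', ← LinearMap.range_comp]; rfl
      refine exists_odd_grading_of_map ?_ hd (hs.trans hmap.symm) hI hJ
      rw [hmap, _root_.pow_succ]
      exact LinearMap.range_comp_le_range _ _
  obtain ⟨I, J, hd, hs, hI, hJ⟩ := key 0 (Nat.zero_le _)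
  refine ⟨I, J, ⟨hd, codisjoint_iff.mpr (hs.trans ?_)⟩, hI, hJ⟩
  rw [pow_zero]; exact LinearMap.range_id

/-- A nilpotent endomorphism is a sum of two square-zero endomorphisms. -/
theorem IsNilpotent.exists_add_square_zero {f : End F V} (hf : IsNilpotent f) :
    ∃ a b : End F V, a ^ 2 = 0 ∧ b ^ 2 = 0 ∧ f = a + b := by
  obtain ⟨I, J, h, hI, hJ⟩ := hf.exists_odd_grading
  rw [Submodule.map_le_iff_le_comap] at hI hJ
  refine ⟨f * I.projection J h, f * J.projection I h.symm, ?_, ?_, ?_⟩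
  · ext x
    have : f (I.projection J h x) ∈ J := hI (Submodule.projection_apply_mem h x)
    simp [sq, (Submodule.projection_apply_eq_zero_iff h).mpr this]
  · ext x
    have : f (J.projection I h.symm x) ∈ I := hJ (Submodule.projection_apply_mem h.symm x)
    simp [sq, (Submodule.projection_apply_eq_zero_iff h.symm).mpr this]
  · ext x
    simp [← map_add, Submodule.projection_add_projection_eq_self]

end Nilpotent
section SumNilpotent

variable {F : Type*} [Field F] {V : Type u} [AddCommGroup V] [Module F V]

/-- The projection onto the kernel of `φ` along a vector `v` with `φ v = 1`. -/
def kerProjection (φ : Dual F V) {v : V} (hv : φ v = 1) : V →ₗ[F] LinearMap.ker φ :=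
  (LinearMap.id - φ.smulRight v).codRestrict _ fun x => by simp [hv]

theorem coe_kerProjection (φ : Dual F V) {v : V} (hv : φ v = 1) (x : V) :
    (kerProjection φ hv x : V) = x - φ x • v := rfl

/-- The compression of `f` to the kernel of `φ` along a vector `v` with `φ v = 1`. -/
def kerCompression (f : End F V) (φ : Dual F V) {v : V} (hv : φ v = 1) :
    End F (LinearMap.ker φ) :=
  kerProjection φ hv ∘ₗ f ∘ₗ (LinearMap.ker φ).subtype

theorem coe_kerCompression (f : End F V) (φ : Dual F V) {v : V} (hv : φ v = 1)
    (x : LinearMap.ker φ) : (kerCompression f φ hv x : V) = f x - φ (f x) • v := rfl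

theorem trace_kerCompression [FiniteDimensional F V] (f : End F V) (φ : Dual F V) {v : V}
    (hv : φ v = 1) (hfv : φ (f v) = 0) :
    LinearMap.trace F _ (kerCompression f φ hv) = LinearMap.trace F V f := by
  rw [kerCompression, LinearMap.trace_comp_comm']
  have : (f ∘ₗ (LinearMap.ker φ).subtype) ∘ₗ kerProjection φ hv = f - φ.smulRight (f v) := by
    ext x
    simp [coe_kerProjection]
  rw [this, map_sub, LinearMap.trace_smulRight, hfv, sub_zero]

theorem exists_nilpotent_add_of_kerCompression {f : End F V} {φ : Dual F V} {v : V}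
    (hv : φ v = 1) (hfv : φ (f v) = 0)
    (h : ∃ a b, IsNilpotent a ∧ IsNilpotent b ∧ kerCompression f φ hv = a + b) :
    ∃ a b : End F V, IsNilpotent a ∧ IsNilpotent b ∧ f = a + b := by
  obtain ⟨a, b, ⟨k, hk⟩, ⟨l, hl⟩, hab⟩ := h
  set p := kerProjection φ hv
  set ι := (LinearMap.ker φ).subtype
  have hp : ∀ x : LinearMap.ker φ, p x = x := fun x => by
    ext; simp [p, coe_kerProjection]
  have hpv : p v = 0 := by ext; simp [p, coe_kerProjection, hv]
  refine ⟨ι ∘ₗ a ∘ₗ p + (φ ∘ₗ f ∘ₗ ι ∘ₗ p).smulRight v, ι ∘ₗ b ∘ₗ p + φ.smulRight (f v), ?_, ?_, ?_⟩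
  · set A : End F V := ι ∘ₗ a ∘ₗ p + (φ ∘ₗ f ∘ₗ ι ∘ₗ p).smulRight v
    have hA : ∀ x, p (A x) = a (p x) := fun x => by simp [A, ι, hp, hpv]
    have hAk : ∀ m x, p ((A ^ m) x) = (a ^ m) (p x) := by
      intro m
      induction m with
      | zero => simp
      | succ m ih => intro x; simp [pow_succ', hA, ih]
    refine ⟨k + 1, LinearMap.ext fun x => ?_⟩
    have h0 : p ((A ^ k) x) = 0 := by simp [hAk, hk]
    simp [pow_succ', A, h0]
  · set B : End F V := ι ∘ₗ b ∘ₗ p + φ.smulRight (f v)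
    have hB : ∀ x : LinearMap.ker φ, B x = b x := fun x => by simp [B, ι, hp]
    have hBl : ∀ m (x : LinearMap.ker φ), (B ^ m) x = (b ^ m) x := by
      intro m
      induction m with
      | zero => simp
      | succ m ih => intro x; simp [pow_succ, hB, ih]
    refine ⟨l + 1, LinearMap.ext fun x => ?_⟩
    have hx : B x ∈ LinearMap.ker φ := by simp [B, ι, hfv]
    have := hBl l ⟨B x, hx⟩
    simpa [pow_succ, hl] using this
  · ext x
    have h1 := congrArg (fun g => (g (p x) : V)) hab
    simp only [coe_kerCompression] at h1
    have h2 : f (p x) = f x - φ x • f v := by simp [p, coe_kerProjection]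
    simp only [LinearMap.add_apply, LinearMap.comp_apply, LinearMap.smulRight_apply, ι,
      Submodule.subtype_apply, Submodule.coe_add] at h1 ⊢
    rw [h2] at h1 ⊢
    linear_combination (norm := module) h1

/-- If the compressions of `f` along `v` to the kernels of `φ` and `φ + ψ` are both scalar, where
`ψ` is nonzero and vanishes at `v` and `f v`, then `f v` is a multiple of `v`. -/
theorem mem_span_of_kerCompression_eq_smul {f : End F V} {φ ψ : Dual F V} {v : V}
    (hv : φ v = 1) (hfv : φ (f v) = 0) (hψ : ψ ≠ 0) (hψv : ψ v = 0) (hψfv : ψ (f v) = 0)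
    (hv' : (φ + ψ) v = 1) {c d : F} (hc : kerCompression f φ hv = c • LinearMap.id)
    (hd : kerCompression f (φ + ψ) hv' = d • LinearMap.id) : f v ∈ Submodule.span F {v} := by
  by_contra hmem
  have h1 : ∀ w, φ w = 0 → f w - c • w ∈ Submodule.span F {v} := fun w hw => by
    have := congrArg (fun g => (g ⟨w, hw⟩ : V)) hc
    simp only [coe_kerCompression, LinearMap.smul_apply, LinearMap.id_apply,
      Submodule.coe_smul] at this
    exact Submodule.mem_span_singleton.mpr ⟨φ (f w), by rw [← this]; abel⟩
  have h2 : ∀ w, (φ + ψ) w = 0 → f w - d • w ∈ Submodule.span F {v} := fun w hw => by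
    have := congrArg (fun g => (g ⟨w, hw⟩ : V)) hd
    simp only [coe_kerCompression, LinearMap.smul_apply, LinearMap.id_apply,
      Submodule.coe_smul] at this
    exact Submodule.mem_span_singleton.mpr ⟨(φ + ψ) (f w), by rw [← this]; abel⟩
  have hcd : c = d := by
    by_contra hne
    have h3 := Submodule.sub_mem _ (h2 (f v) (by simp [hfv, hψfv])) (h1 (f v) hfv)
    rw [show f (f v) - d • f v - (f (f v) - c • f v) = (c - d) • f v by module] at h3
    exact hmem ((Submodule.smul_mem_iff _ (sub_ne_zero.mpr hne)).mp h3)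
  subst hcd
  obtain ⟨x, hx⟩ : ∃ x, ψ x = 1 := LinearMap.surjective hψ 1
  set w := x - φ x • v with hw
  have hw1 : φ w = 0 := by simp [hw, hv]
  have hw2 : (φ + ψ) (w - v) = 0 := by simp [hw, hv, hψv, hx]
  have h3 := Submodule.sub_mem _ (h1 w hw1) (h2 (w - v) hw2)
  rw [map_sub f w v, show f w - c • w - (f w - f v - c • (w - v)) = f v - c • v by module] at h3
  apply hmem
  simpa using Submodule.add_mem _ h3 (Submodule.smul_mem _ c (Submodule.mem_span_singleton_self v))

/-- A non-scalar endomorphism of trace zero is a sum of two nilpotent endomorphisms. -/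
theorem exists_nilpotent_add_of_trace_eq_zero [FiniteDimensional F V] {f : End F V}
    (hf : LinearMap.trace F V f = 0) (hns : ∀ c : F, f ≠ c • LinearMap.id) :
    ∃ a b : End F V, IsNilpotent a ∧ IsNilpotent b ∧ f = a + b := by
  induction hn : finrank F V using Nat.strong_induction_on generalizing V with
  | _ n ih =>
  obtain ⟨v, hvf⟩ : ∃ v, LinearIndependent F ![v, f v] := by
    by_contra! h
    obtain ⟨c, hc⟩ := f.exists_eq_smul_id_of_forall_notLinearIndependent h
    exact hns c hc
  have hmem : f v ∉ Submodule.span F {v} := fun h => by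
    obtain ⟨c, hc⟩ := Submodule.mem_span_singleton.mp h
    have := LinearIndependent.pair_iff.mp hvf c (-1) (by simp [hc])
    simp at this
  have hmem' : v ∉ Submodule.span F {f v} := fun h => by
    obtain ⟨c, hc⟩ := Submodule.mem_span_singleton.mp h
    have := LinearIndependent.pair_iff.mp hvf (-1) c (by simp [hc])
    simp at this
  obtain ⟨φ, hv, hfv⟩ : ∃ φ : Dual F V, φ v = 1 ∧ φ (f v) = 0 := by
    obtain ⟨θ, hθ, hθf⟩ := Submodule.exists_dual_map_eq_bot_of_notMem hmem' inferInstance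
    refine ⟨(θ v)⁻¹ • θ, by simp [hθ], ?_⟩
    have : θ (f v) ∈ (Submodule.span F {f v}).map θ :=
      Submodule.mem_map_of_mem (Submodule.mem_span_singleton_self _)
    rw [hθf, Submodule.mem_bot] at this
    simp [this]
  have step : ∀ φ' : Dual F V, ∀ hv' : φ' v = 1, φ' (f v) = 0 →
      (∀ c : F, kerCompression f φ' hv' ≠ c • LinearMap.id) →
      ∃ a b : End F V, IsNilpotent a ∧ IsNilpotent b ∧ f = a + b := by
    intro φ' hv' hfv' hns'
    refine exists_nilpotent_add_of_kerCompression hv' hfv'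
      (ih _ ?_ ((trace_kerCompression f φ' hv' hfv').trans hf) hns' rfl)
    rw [← hn]
    refine Submodule.finrank_lt (fun h => ?_)
    have : v ∈ LinearMap.ker φ' := h ▸ Submodule.mem_top
    simp [hv'] at this
  by_cases h : ∀ c : F, kerCompression f φ hv ≠ c • LinearMap.id
  · exact step φ hv hfv h
  push Not at h
  obtain ⟨c, hc⟩ := h
  by_cases hc0 : c = 0
  · exact exists_nilpotent_add_of_kerCompression hv hfv
      ⟨0, 0, IsNilpotent.zero, IsNilpotent.zero, by simp [hc, hc0]⟩
  have hlt : Submodule.span F {v, f v} < ⊤ := by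
    refine lt_top_iff_ne_top.mpr fun htop => ?_
    have h2 : finrank F V = 2 := by
      have hcard := finrank_span_eq_card hvf
      have hrange : Set.range ![v, f v] = {v, f v} := by simp [Set.pair_comm]
      rwa [hrange, htop, finrank_top, Fintype.card_fin] at hcard
    have hker : finrank F (LinearMap.ker φ) = 1 := by
      have h3 := LinearMap.finrank_range_add_finrank_ker φ
      have hφ : φ ≠ 0 := fun h0 => by simp [h0] at hv
      rw [LinearMap.range_eq_top.mpr (LinearMap.surjective hφ)] at h3
      simp at h3
      omega
    have h4 := (trace_kerCompression f φ hv hfv).trans hf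
    rw [hc, map_smul, LinearMap.trace_id, hker] at h4
    simp [hc0] at h4
  obtain ⟨ψ, hψ, hψm⟩ := Submodule.exists_dual_map_eq_bot_of_lt_top hlt inferInstance
  have hψ0 : ∀ x ∈ ({v, f v} : Set V), ψ x = 0 := fun x hx => by
    have : ψ x ∈ (Submodule.span F {v, f v}).map ψ :=
      Submodule.mem_map_of_mem (Submodule.subset_span hx)
    simpa [hψm] using this
  have hψv : ψ v = 0 := hψ0 v (by simp)
  have hψfv : ψ (f v) = 0 := hψ0 (f v) (by simp)
  exact step (φ + ψ) (by simp [hv, hψv]) (by simp [hfv, hψfv]) fun d hd =>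
    hmem (mem_span_of_kerCompression_eq_smul hv hfv hψ hψv hψfv _ hc hd)

end SumNilpotent

section Padding

variable {F V : Type*} [Field F] [AddCommGroup V] [Module F V]

/-- If `f = a + b` with `f` invertible, then `f ⊕ 0` is similar to the endomorphism whose two block
rows are both `(a, b)`. -/
theorem IsSumThreeSquareZero.prodMap_zero_of_coprod {f a b : End F V} (hf : IsUnit f)
    (hab : f = a + b)
    (h : IsSumThreeSquareZero (((a.coprod b).prod (a.coprod b)) : End F (V × V))) :
    IsSumThreeSquareZero (f.prodMap 0 : End F (V × V)) := by
  obtain ⟨g, hfg, hgf⟩ := isUnit_iff_exists.mp hf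
  have hfg' : ∀ x, f (g x) = x := fun x => LinearMap.congr_fun hfg x
  have hgf' : ∀ x, g (a x) = x - g (b x) := fun x => by
    rw [eq_sub_iff_add_eq, ← map_add]
    exact (congrArg g (LinearMap.congr_fun hab x)).symm.trans (LinearMap.congr_fun hgf x)
  let p : End F (V × V) := (LinearMap.fst F V V - (g * b) ∘ₗ LinearMap.snd F V V).prod
    (LinearMap.fst F V V + (g * a) ∘ₗ LinearMap.snd F V V)
  let q : End F (V × V) := ((g * a).coprod (g * b)).prod
    (LinearMap.snd F V V - LinearMap.fst F V V)
  have hp : ∀ x, p x = (x.1 - g (b x.2), x.1 + g (a x.2)) := fun _ => rfl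
  have hq : ∀ x, q x = (g (a x.1) + g (b x.2), x.2 - x.1) := fun _ => rfl
  refine .of_mul_eq_mul (p := p) (q := q) ?_ ?_ ?_ h
  · refine LinearMap.ext fun x => ?_
    ext <;> simp [hp, hq, hgf'] <;> abel
  · refine LinearMap.ext fun x => ?_
    ext <;> simp [hp, hq, hgf']
  · refine LinearMap.ext fun x => ?_
    have hgba : a (g (b x.2)) + b (g (b x.2)) = b x.2 := by
      rw [← LinearMap.add_apply, ← hab, hfg']
    have hgaa : b (g (a x.2)) = b x.2 - b (g (b x.2)) := by rw [hgf', map_sub]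
    ext <;> simp only [hp, hab, Module.End.mul_apply, LinearMap.prodMap_apply,
      LinearMap.zero_apply, LinearMap.prod_apply, Function.prod, LinearMap.coprod_apply,
      LinearMap.add_apply, map_zero, map_add, map_sub, hgaa]
    all_goals linear_combination (norm := module) hgba

theorem IsSumThreeSquareZero.prodMap_zero_of_nilpotent {f : End F V} (hf : IsNilpotent f) :
    IsSumThreeSquareZero (f.prodMap 0 : End F (V × V)) := by
  obtain ⟨a, b, ha, hb, rfl⟩ := hf.exists_add_square_zero
  refine ⟨a.prodMap 0, b.prodMap 0, 0, ?_, ?_, by simp, ?_⟩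
  · rw [sq, LinearMap.prodMap_mul, ← sq, ha, mul_zero, LinearMap.prodMap_zero]
  · rw [sq, LinearMap.prodMap_mul, ← sq, hb, mul_zero, LinearMap.prodMap_zero]
  · rw [add_zero, ← LinearMap.prodMap_add, add_zero]

theorem isNilpotent_of_blockTriangular {a b c : End F V} (ha : IsNilpotent a)
    (hb : IsNilpotent b) :
    IsNilpotent ((a.coprod c).prod (b ∘ₗ LinearMap.snd F V V) : End F (V × V)) := by
  obtain ⟨k, hk⟩ := ha
  obtain ⟨l, hl⟩ := hb
  set N : End F (V × V) := (a.coprod c).prod (b ∘ₗ LinearMap.snd F V V)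
  have hsnd : ∀ m x, ((N ^ m) x).2 = (b ^ m) x.2 := by
    intro m
    induction m with
    | zero => simp
    | succ m ih => intro x; simp [pow_succ', ih, N]
  have hinl : ∀ m y, (N ^ m) (y, 0) = ((a ^ m) y, 0) := by
    intro m
    induction m with
    | zero => simp
    | succ m ih => intro y; simp [pow_succ', ih, N]
  refine ⟨k + l, LinearMap.ext fun x => ?_⟩
  have hx : (N ^ l) x = (((N ^ l) x).1, 0) := Prod.ext rfl (by simp [hsnd, hl])
  rw [pow_add, Module.End.mul_apply, hx, hinl, hk]
  rfl

theorem IsSumThreeSquareZero.prodMap_zero_of_nilpotent_add {f a b : End F V} (hf : IsUnit f)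
    (hab : f = a + b) (ha : IsNilpotent a) (hb : IsNilpotent b) :
    IsSumThreeSquareZero (f.prodMap 0 : End F (V × V)) := by
  refine .prodMap_zero_of_coprod hf hab ?_
  obtain ⟨B, C, hB, hC, hBC⟩ :=
    (isNilpotent_of_blockTriangular (c := b) ha hb).exists_add_square_zero
  refine ⟨B, C, LinearMap.inr F V V ∘ₗ a ∘ₗ LinearMap.fst F V V, hB, hC, ?_, ?_⟩
  · refine LinearMap.ext fun x => ?_
    ext <;> simp [sq]
  · rw [← hBC]
    refine LinearMap.ext fun x => ?_
    ext <;> simp [add_comm]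

theorem IsSumThreeSquareZero.prodMap_zero_of_conj {f h t s : End F V} (hf : IsUnit f)
    (hts : t * s = 1) (hst : s * t = 1) (hth : t * h = (h - f) * t) :
    IsSumThreeSquareZero (f.prodMap 0 : End F (V × V)) := by
  refine .prodMap_zero_of_coprod (a := h) (b := f - h) hf (by abel) ?_
  have hst' : ∀ x, s (t x) = x := fun x => LinearMap.congr_fun hst x
  have hth' : ∀ x, t (h (s x)) = h x - f x := fun x => by
    have := LinearMap.congr_fun hth (s x)
    have hts' : t (s x) = x := LinearMap.congr_fun hts x
    simpa [hts'] using this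
  refine ⟨(h.coprod (-(h * s))).prod ((t * h).coprod (-(t * h * s))),
    LinearMap.inl F V V ∘ₗ (f - h + h * s) ∘ₗ LinearMap.snd F V V,
    LinearMap.inr F V V ∘ₗ (h - t * h) ∘ₗ LinearMap.fst F V V, ?_, ?_, ?_, ?_⟩
  · refine LinearMap.ext fun x => ?_
    ext <;> simp [sq, hst']
  · refine LinearMap.ext fun x => ?_
    ext <;> simp [sq]
  · refine LinearMap.ext fun x => ?_
    ext <;> simp [sq]
  · refine LinearMap.ext fun x => ?_
    ext <;> simp [hth'] <;> abel

theorem IsSumThreeSquareZero.prodMap_zero_of_smul_id [FiniteDimensional F V] {c : F}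
    (hc : c ≠ 0) (hn : (finrank F V : F) * c = 0) :
    IsSumThreeSquareZero ((c • LinearMap.id : End F V).prodMap 0 : End F (V × V)) := by
  obtain ⟨n, hnV⟩ : ∃ n, finrank F V = n := ⟨_, rfl⟩
  let b := finBasisOfFinrankEq F V hnV
  rw [hnV] at hn
  let t := b.equiv b (finRotate n)
  have hu : IsUnit (c • LinearMap.id : End F V) :=
    isUnit_one.smul (Units.mk0 c hc)
  refine .prodMap_zero_of_conj (h := b.constr F fun i => ((i : ℕ) * c) • b i) (t := t)
    (s := t.symm) hu ?_ ?_ ?_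
  · ext x; simp
  · ext x; simp
  · refine b.ext fun i => ?_
    obtain _ | n := n
    · exact i.elim0
    rcases eq_or_ne i (Fin.last n) with rfl | hi
    · have hc' : (n * c : F) = -c := by
        linear_combination (norm := (push_cast; ring)) hn
      simp [t, hc']
    · have hval : ((i + 1 : Fin (n + 1)) : ℕ) = i + 1 :=
        Fin.val_add_one_of_lt (Fin.lt_last_iff_ne_last.mpr hi)
      simp [t, hval, add_mul, add_smul]

/-- The property of `f ⊕ 0` being a sum of three square-zero endomorphisms is inherited by direct
sums in `f`. -/
theorem IsSumThreeSquareZero.prodMap_zero_of_equiv {V₁ V₂ : Type*} [AddCommGroup V₁]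
    [AddCommGroup V₂] [Module F V₁] [Module F V₂] {f : End F V} {f₁ : End F V₁} {f₂ : End F V₂}
    (e : (V₁ × V₂) ≃ₗ[F] V) (he : e.conj (f₁.prodMap f₂) = f)
    (h₁ : IsSumThreeSquareZero (f₁.prodMap 0 : End F (V₁ × V₁)))
    (h₂ : IsSumThreeSquareZero (f₂.prodMap 0 : End F (V₂ × V₂))) :
    IsSumThreeSquareZero (f.prodMap 0 : End F (V × V)) := by
  obtain ⟨a₁, b₁, c₁, ha₁, hb₁, hc₁, hs₁⟩ := h₁
  obtain ⟨a₂, b₂, c₂, ha₂, hb₂, hc₂, hs₂⟩ := h₂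
  have h : IsSumThreeSquareZero ((f₁.prodMap 0, f₂.prodMap 0) :
      End F (V₁ × V₁) × End F (V₂ × V₂)) :=
    ⟨(a₁, a₂), (b₁, b₂), (c₁, c₂), Prod.ext ha₁ ha₂, Prod.ext hb₁ hb₂, Prod.ext hc₁ hc₂,
      Prod.ext hs₁ hs₂⟩
  have h' := (h.map (LinearMap.prodMapRingHom F (V₁ × V₁) (V₂ × V₂))).map
    ((LinearEquiv.prodProdProdComm F V₁ V₁ V₂ V₂).trans
      (e.prodCongr e)).conjRingEquiv.toRingHom
  convert h' using 1
  subst he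
  refine LinearMap.ext fun x => ?_
  ext
  · simp [LinearEquiv.conj_apply]
  · have he0 : e (0, 0) = 0 := map_zero e
    simp [LinearEquiv.conj_apply, he0]

/-- If `f` has trace zero, then `f ⊕ 0` is a sum of three square-zero endomorphisms. By Fitting's
lemma `f` may be taken nilpotent or invertible; in the latter case either `f` is a sum of two
nilpotents, or it is scalar. -/
theorem isSumThreeSquareZero_prodMap_zero [FiniteDimensional F V] (f : End F V)
    (hf : LinearMap.trace F V f = 0) : IsSumThreeSquareZero (f.prodMap 0 : End F (V × V)) := by
  obtain ⟨k, hk, hcompl⟩ :=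
    ((Filter.eventually_ge_atTop 1).and f.eventually_isCompl_ker_pow_range_pow).exists
  set K := LinearMap.ker (f ^ k)
  set R := LinearMap.range (f ^ k)
  have hcomm : ∀ x, (f ^ k) (f x) = f ((f ^ k) x) := fun x => by
    rw [← Module.End.mul_apply, ← Module.End.mul_apply, ← pow_succ, ← pow_succ']
  have hK : ∀ x ∈ K, f x ∈ K := fun x hx => by
    rw [LinearMap.mem_ker] at hx ⊢
    rw [hcomm, hx, map_zero]
  have hR : ∀ x ∈ R, f x ∈ R := by
    rintro _ ⟨y, rfl⟩
    exact ⟨f y, hcomm y⟩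
  have hnil : IsNilpotent (f.restrict hK) := by
    refine ⟨k, LinearMap.ext fun x => ?_⟩
    rw [Module.End.pow_restrict]
    ext
    simp
  have hunit : IsUnit (f.restrict hR) := by
    rw [LinearMap.isUnit_iff_ker_eq_bot, LinearMap.ker_eq_bot']
    intro x hx
    have hx0 : f x = 0 := congrArg Subtype.val hx
    have hxK : (x : V) ∈ K := by
      obtain ⟨k, rfl⟩ := Nat.exists_eq_add_of_le' hk
      simp [K, pow_succ, hx0]
    exact Subtype.ext ((Submodule.disjoint_def.mp hcompl.disjoint) x hxK x.2)
  have he : (K.prodEquivOfIsCompl R hcompl).conj ((f.restrict hK).prodMap (f.restrict hR)) = f := by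
    refine LinearMap.ext fun x => ?_
    obtain ⟨y, rfl⟩ := (K.prodEquivOfIsCompl R hcompl).surjective x
    simp [LinearEquiv.conj_apply]
  have htr : LinearMap.trace F R (f.restrict hR) = 0 := by
    rw [← he, LinearMap.trace_conj', LinearMap.trace_prodMap',
      (LinearMap.isNilpotent_trace_of_isNilpotent hnil).eq_zero, zero_add] at hf
    exact hf
  refine .prodMap_zero_of_equiv _ he (.prodMap_zero_of_nilpotent hnil) ?_
  by_cases hs : ∀ c : F, f.restrict hR ≠ c • LinearMap.id
  · obtain ⟨a, b, ha, hb, hab⟩ := exists_nilpotent_add_of_trace_eq_zero htr hs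
    exact .prodMap_zero_of_nilpotent_add hunit hab ha hb
  · push Not at hs
    obtain ⟨c, hc⟩ := hs
    rw [hc] at htr ⊢
    by_cases hc0 : c = 0
    · subst hc0
      exact .prodMap_zero_of_nilpotent (by simp)
    · refine .prodMap_zero_of_smul_id hc0 ?_
      simpa [mul_comm] using htr

end Padding

/-- For every trace-zero `n × n` matrix `A` over a field, the block-diagonal
matrix `A ⊕ 0ₙ` is the sum of three square-zero matrices. -/
theorem trace_zero_oplus_zero_sum_three_square_zero (F : Type*) [Field F] (n : ℕ)
    (A : Matrix (Fin n) (Fin n) F) (hA : A.trace = 0) :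
    ∃ B C D : Matrix (Fin n ⊕ Fin n) (Fin n ⊕ Fin n) F,
      B ^ 2 = 0 ∧ C ^ 2 = 0 ∧ D ^ 2 = 0 ∧
      Matrix.fromBlocks A 0 0 (0 : Matrix (Fin n) (Fin n) F) = B + C + D := by
  let b := Pi.basisFun F (Fin n)
  have h := (isSumThreeSquareZero_prodMap_zero (Matrix.toLin b b A) (by simpa using hA)).map
    (LinearMap.toMatrixAlgEquiv (b.prod b)).toRingEquiv.toRingHom
  have hM : LinearMap.toMatrix (b.prod b) (b.prod b) ((Matrix.toLin b b A).prodMap 0) =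
      Matrix.fromBlocks A 0 0 0 := by
    rw [LinearMap.toMatrix_prodMap]; simp
  rw [← hM]
  exact h
end

section
/- Over a field of characteristic 2, every square matrix with trace zero is the sum of three square-zero matrices. -/
section

open Module

/-- Up to two square-zero summands exchanging the image and the kernel of a projection `π`,
`f` is a square-zero endomorphism plus a rank one endomorphism orthogonal to it. -/
def HasSquareZeroSplitting {F V : Type*} [Field F] [AddCommGroup V] [Module F V]
    (f : End F V) : Prop :=
  ∃ (π N : End F V) (u : V) (φ : Dual F V),
    (∀ x, π (π x) = π x) ∧ (∀ x, N (N x) = 0) ∧ N u = 0 ∧ (∀ x, φ (N x) = 0) ∧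
    π u = u ∧ (∀ x, φ (π x) = φ x) ∧
    (∀ x, π (f (π x)) = π (N (π x)) + φ x • u) ∧
    ∀ x, f (x - π x) - π (f (x - π x)) = N (x - π x) - π (N (x - π x))

variable {F V W : Type*} [Field F] [AddCommGroup V] [Module F V] [AddCommGroup W] [Module F W]

theorem HasSquareZeroSplitting.of_equiv {f : End F V} {g : End F W} (e : V ≃ₗ[F] W)
    (h : ∀ x, e (f x) = g (e x)) (hf : HasSquareZeroSplitting f) :
    HasSquareZeroSplitting g := by
  obtain ⟨π, N, u, φ, h1, h2, h3, h4, h5, h6, h7, h8⟩ := hf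
  have hg : ∀ y, g y = e (f (e.symm y)) := fun y => by simp [h]
  refine ⟨e.conj π, e.conj N, e u, φ ∘ₗ e.symm.toLinearMap, ?_, ?_, ?_, ?_, ?_, ?_, ?_, ?_⟩
  · simp [LinearEquiv.conj_apply, h1]
  · simp [LinearEquiv.conj_apply, h2]
  · simp [LinearEquiv.conj_apply, h3]
  · simp [LinearEquiv.conj_apply, h4]
  · simp [LinearEquiv.conj_apply, h5]
  · simp [LinearEquiv.conj_apply, h6]
  · intro x
    simp [LinearEquiv.conj_apply, hg, h7]
  · intro x
    have := congrArg e (h8 (e.symm x))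
    simpa [LinearEquiv.conj_apply, hg] using this

theorem HasSquareZeroSplitting.prodMap {f : End F V} {g : End F W}
    (hf : HasSquareZeroSplitting f)
    (hg : ∀ a : F, ∃ (π : End F W) (u e : W) (φ ε : Dual F W),
      (∀ x, π (π x) = π x) ∧ π u = u ∧ (∀ x, φ (π x) = φ x) ∧ π e = 0 ∧ (∀ x, ε (π x) = 0) ∧
      ε e = a ∧ (∀ x, π (g (π x)) = φ x • u) ∧
      ∀ x, g (x - π x) - π (g (x - π x)) = ε x • e) :
    HasSquareZeroSplitting (LinearMap.prodMap f g) := by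
  obtain ⟨π, N, u, φ, h1, h2, h3, h4, h5, h6, h7, h8⟩ := hf
  obtain ⟨ρ, v, e, θ, ε, k1, k2, k3, k4, k5, k6, k7, k8⟩ := hg (-φ u)
  have hεv : ε v = 0 := by rw [← k2, k5]
  have hθe : θ e = 0 := by rw [← k3, k4, map_zero]
  refine ⟨LinearMap.prodMap π ρ,
    LinearMap.prodMap N 0 + (φ.coprod ε).smulRight (u, e), (0, v), θ ∘ₗ LinearMap.snd F V W,
    ?_, ?_, ?_, ?_, ?_, ?_, ?_, ?_⟩
  · simp [h1, k1]
  · simp [h2, h3, h4, k6]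
  · simp [hεv]
  · simp [hθe]
  · simp [k2]
  · simp [k3]
  · simp [h5, h6, h7, k4, k5, k7]
  · rintro ⟨x, y⟩
    ext
    · simpa [h5, h6, k5] using h8 x
    · simpa [h6, k4, k5] using k8 y

theorem HasSquareZeroSplitting.prodMap_smul_id [CharP F 2] {f : End F V}
    (hf : HasSquareZeroSplitting f) (c : F) :
    HasSquareZeroSplitting (LinearMap.prodMap f (c • LinearMap.id : End F (F × F))) := by
  obtain ⟨π, N, u, φ, h1, h2, h3, h4, h5, h6, h7, h8⟩ := hf
  refine ⟨LinearMap.prodMap π (LinearMap.prodMap LinearMap.id 0),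
    LinearMap.prodMap N ((LinearMap.coprod LinearMap.id LinearMap.id).smulRight (c, c)),
    (u, 0), φ ∘ₗ LinearMap.fst F V (F × F), ?_, ?_, ?_, ?_, ?_, ?_, ?_, ?_⟩
  · simp [h1]
  · simp [h2, CharTwo.add_self_eq_zero]
  · simp [h3]
  · simp [h4]
  · simp [h5]
  · simp [h6]
  · simp [h7, mul_comm]
  · rintro ⟨x, y, z⟩
    ext
    · simpa using h8 x
    · simp
    · simp [mul_comm]

theorem hasSquareZeroSplitting_smul_id_pi [CharP F 2] (c : F) (n : ℕ) :
    HasSquareZeroSplitting (c • LinearMap.id : End F (Fin n → F)) := by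
  induction n using Nat.twoStepInduction with
  | zero => exact ⟨0, 0, 0, 0, by simp, by simp, by simp, by simp, by simp, by simp, by simp,
      fun x => Subsingleton.elim _ _⟩
  | one =>
    refine ⟨1, 0, fun _ => 1, c • LinearMap.proj 0, by simp, by simp, by simp, by simp, by simp,
      by simp, fun x => ?_, by simp⟩
    ext i
    simp [Subsingleton.elim i 0]
  | more n ih _ =>
    refine (ih.prodMap_smul_id c).of_equiv
      (LinearEquiv.ofFinrankEq ((Fin n → F) × F × F) (Fin (n + 2) → F) (by simp)) fun x => ?_
    rw [LinearMap.smul_apply, LinearMap.id_apply, ← map_smul]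
    rfl

theorem hasSquareZeroSplitting_smul_id [CharP F 2] [FiniteDimensional F V] (c : F) :
    HasSquareZeroSplitting (c • LinearMap.id : End F V) :=
  (hasSquareZeroSplitting_smul_id_pi c (finrank F V)).of_equiv
    (LinearEquiv.ofFinrankEq _ _ (by simp)) (by simp)

theorem exists_basis_shift_add_smul {g : End F W} {k : ℕ} (b : Basis (Fin (k + 2)) F W)
    (hb : ∀ i : Fin (k + 1), g (b i.castSucc) = b i.succ) (a : F) :
    ∃ b' : Basis (Fin (k + 2)) F W,
      (∀ i : Fin (k + 1), i ≠ Fin.last k → g (b' i.castSucc) = b' i.succ) ∧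
      g (b' (Fin.last k).castSucc) = b' (Fin.last (k + 1)) + a • b' (Fin.last k).castSucc := by
  have h0 : b.coord (Fin.last (k + 1)) (-a • b (Fin.last k).castSucc) = 0 := by
    simp
  refine ⟨b.map (LinearEquiv.transvection h0), fun i hi => ?_, ?_⟩
  · have : i.succ ≠ Fin.last (k + 1) := by rwa [← Fin.succ_last, Ne, Fin.succ_inj]
    simp [LinearMap.transvection.apply, hb, this]
  · simp [LinearMap.transvection.apply, hb]

theorem exists_graded_rank_one_blocks {g : End F W} {k : ℕ} (b : Basis (Fin (k + 2)) F W)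
    (hb : ∀ i : Fin (k + 1), g (b i.castSucc) = b i.succ) (a : F) :
    ∃ (π : End F W) (u e : W) (φ ε : Dual F W),
      (∀ x, π (π x) = π x) ∧ π u = u ∧ (∀ x, φ (π x) = φ x) ∧ π e = 0 ∧ (∀ x, ε (π x) = 0) ∧
      ε e = a ∧ (∀ x, π (g (π x)) = φ x • u) ∧
      ∀ x, g (x - π x) - π (g (x - π x)) = ε x • e := by
  obtain ⟨b, hb, hlast⟩ := exists_basis_shift_add_smul b hb a
  have hval : ∀ j : Fin (k + 2), j = Fin.last (k + 1) ∨ j = (Fin.last k).castSucc ∨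
      ∃ i : Fin (k + 1), i ≠ Fin.last k ∧ j = i.castSucc := by
    intro j
    induction j using Fin.lastCases with
    | last => exact Or.inl rfl
    | cast i =>
      by_cases hi : i = Fin.last k
      · exact Or.inr (Or.inl (by rw [hi]))
      · exact Or.inr (Or.inr ⟨i, hi, rfl⟩)
  set π : End F W := b.constr F fun i => if Even (i.val + k + 1) then b i else 0 with hπ
  have hπb : ∀ i, π (b i) = if Even (i.val + k + 1) then b i else 0 := fun i => by
    rw [hπ, Basis.constr_basis]
  have hproj : ∀ x, π (π x) = π x := by
    intro x
    suffices h : π ∘ₗ π = π from LinearMap.congr_fun h x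
    refine b.ext fun i => ?_
    by_cases hi : Even (i.val + k + 1) <;> simp [hπb, hi]
  have hπlast : π (b (Fin.last (k + 1))) = b (Fin.last (k + 1)) := by
    rw [hπb, if_pos]
    rw [Fin.val_last]
    exact ⟨k + 1, by ring⟩
  have hπpen : π (b (Fin.last k).castSucc) = 0 := by
    rw [hπb, if_neg]
    simp [Nat.even_add_one]
  have hsucc : ∀ i : Fin (k + 1), π (b i.succ) = if Even (i.val + k + 1) then 0 else b i.succ := by
    intro i
    rw [hπb, Fin.val_succ]
    have : Even (i.val + 1 + k + 1) ↔ ¬ Even (i.val + k + 1) := by grind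
    simp only [this, ite_not]
  refine ⟨π, π (g (b (Fin.last (k + 1)))), a • b (Fin.last k).castSucc,
    b.coord (Fin.last (k + 1)), b.coord (Fin.last k).castSucc, hproj, hproj _, ?_, ?_, ?_, ?_,
    ?_, ?_⟩
  · intro x
    suffices h : b.coord (Fin.last (k + 1)) ∘ₗ π = b.coord (Fin.last (k + 1)) from
      LinearMap.congr_fun h x
    refine b.ext fun j => ?_
    rcases hval j with rfl | rfl | ⟨i, hi, rfl⟩
    · simp [hπlast]
    · simp [hπpen]
    · by_cases he : Even (i.val + k + 1) <;> simp [hπb, he]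
  · rw [map_smul, hπpen, smul_zero]
  · intro x
    suffices h : b.coord (Fin.last k).castSucc ∘ₗ π = 0 from LinearMap.congr_fun h x
    refine b.ext fun j => ?_
    rcases hval j with rfl | rfl | ⟨i, hi, rfl⟩
    · simp [hπlast]
    · simp [hπpen]
    · by_cases he : Even (i.val + k + 1) <;> simp [hπb, he, hi]
  · simp
  · intro x
    suffices h : π ∘ₗ g ∘ₗ π =
        (b.coord (Fin.last (k + 1))).smulRight (π (g (b (Fin.last (k + 1))))) from
      LinearMap.congr_fun h x
    refine b.ext fun j => ?_
    rcases hval j with rfl | rfl | ⟨i, hi, rfl⟩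
    · simp [hπlast]
    · simp [hπpen]
    · by_cases he : Even (i.val + k + 1) <;> simp [hπb i.castSucc, he, hb i hi, hsucc]
  · intro x
    suffices h : (LinearMap.id - π) ∘ₗ g ∘ₗ (LinearMap.id - π) =
        (b.coord (Fin.last k).castSucc).smulRight (a • b (Fin.last k).castSucc) from
      LinearMap.congr_fun h x
    refine b.ext fun j => ?_
    rcases hval j with rfl | rfl | ⟨i, hi, rfl⟩
    · simp [hπlast]
    · simp only [LinearMap.comp_apply, LinearMap.sub_apply, LinearMap.id_apply, hπpen, sub_zero,
        hlast, map_add, map_smul, hπlast]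
      simp
    · by_cases he : Even (i.val + k + 1) <;> simp [hπb i.castSucc, he, hb i hi, hsucc, hi]

/-- A non-scalar endomorphism has a cyclic invariant subspace of dimension at least two with an
invariant complement. -/
theorem exists_isCompl_cyclic [FiniteDimensional F V] (f : End F V)
    (hf : ∀ c : F, f ≠ c • LinearMap.id) :
    ∃ (k : ℕ) (v : V) (p : Submodule F V), (∀ x ∈ p, f x ∈ p) ∧
      LinearIndependent F (fun i : Fin (k + 2) => (f ^ i.val) v) ∧
      (f ^ (k + 2)) v ∈ Submodule.span F (Set.range fun i : Fin (k + 2) => (f ^ i.val) v) ∧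
      IsCompl p (Submodule.span F (Set.range fun i : Fin (k + 2) => (f ^ i.val) v)) := by
  have hmonic : (minpoly F f).Monic := minpoly.monic (Algebra.IsIntegral.isIntegral f)
  have hdeg : 2 ≤ (minpoly F f).natDegree := by
    by_contra! hlt
    have haeval := minpoly.aeval F f
    obtain h0 | h1 : (minpoly F f).natDegree = 0 ∨ (minpoly F f).natDegree = 1 := by omega
    · rw [hmonic.natDegree_eq_zero] at h0
      have h1 : (1 : End F V) = 0 := by simpa [h0] using haeval
      exact hf 0 (by rw [← mul_one f, h1]; simp)
    · have hcoeff : (minpoly F f).coeff 1 = 1 := by rw [← h1]; exact hmonic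
      refine hf (-(minpoly F f).coeff 0) ?_
      rw [Polynomial.eq_X_add_C_of_natDegree_le_one h1.le, hcoeff] at haeval
      simp only [map_one, one_mul, map_add, Polynomial.aeval_X, Polynomial.aeval_C] at haeval
      rw [neg_smul]
      exact eq_neg_of_add_eq_zero_left haeval
  obtain ⟨k, hk⟩ : ∃ k, (minpoly F f).natDegree = k + 2 := ⟨_, (Nat.sub_add_cancel hdeg).symm⟩
  obtain ⟨v, hv⟩ : ∃ v : V, ∀ q : Polynomial F, Polynomial.aeval f q v = 0 → minpoly F f ∣ q := by
    obtain ⟨x, hx⟩ := exists_ker_toSpanSingleton_eq_annihilator (R := Polynomial F)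
      (M := AEval' f)
    refine ⟨(AEval'.of f).symm x, fun q hq => ?_⟩
    rw [← Ideal.mem_span_singleton, Polynomial.span_minpoly_eq_annihilator, ← hx, LinearMap.mem_ker,
      LinearMap.toSpanSingleton_apply]
    apply (AEval'.of f).symm.injective
    rw [map_zero]
    exact hq
  have hpow : ∀ x, (f ^ (k + 2)) x =
      ∑ i : Fin (k + 2), -(minpoly F f).coeff i • (f ^ i.val) x := by
    intro x
    have h := congrArg (Polynomial.aeval f) hmonic.as_sum
    rw [minpoly.aeval, hk] at h
    have h := LinearMap.congr_fun h x
    simp only [map_add, map_sum, map_mul, map_pow, Polynomial.aeval_X, Polynomial.aeval_C] at h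
    rw [LinearMap.add_apply, LinearMap.sum_apply, Finset.sum_range] at h
    rw [eq_neg_of_add_eq_zero_left h.symm, ← Finset.sum_neg_distrib]
    exact Finset.sum_congr rfl fun i _ => (neg_smul _ _).symm
  have hli : LinearIndependent F (fun i : Fin (k + 2) => (f ^ i.val) v) := by
    rw [Fintype.linearIndependent_iff]
    intro c hc i
    set q : Polynomial F := ∑ j : Fin (k + 2), Polynomial.monomial j.val (c j) with hq
    have hdvd : minpoly F f ∣ q := by
      apply hv
      simpa [hq, Polynomial.aeval_monomial, LinearMap.sum_apply] using hc
    have hq0 : q = 0 := by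
      refine Polynomial.eq_zero_of_dvd_of_degree_lt hdvd ?_
      rw [Polynomial.degree_eq_natDegree hmonic.ne_zero, hk, hq]
      refine (Polynomial.degree_sum_le _ _).trans_lt ?_
      rw [Finset.sup_lt_iff (WithBot.bot_lt_coe _)]
      exact fun j _ => (Polynomial.degree_monomial_le _ _).trans_lt (by exact_mod_cast j.isLt)
    have := congrArg (Polynomial.coeff · i.val) hq0
    simpa [hq, Polynomial.finsetSum_coeff, Polynomial.coeff_monomial, Fin.val_inj] using this
  obtain ⟨ψ, hψ⟩ := ((Basis.span hli).coord (Fin.last (k + 1))).exists_extend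
  have hψv : ∀ i, i < k + 2 → ψ ((f ^ i) v) = if i = k + 1 then 1 else 0 := by
    intro i hi
    have h := LinearMap.congr_fun hψ (Basis.span hli ⟨i, hi⟩)
    rw [LinearMap.comp_apply, Submodule.subtype_apply, Basis.coord_apply, Basis.repr_self,
      Finsupp.single_apply, Basis.span_apply] at h
    simpa [Fin.ext_iff] using h
  set Φ : V →ₗ[F] (Fin (k + 2) → F) := LinearMap.pi fun i => ψ ∘ₗ (f ^ i.val) with hΦ
  have hmem : ∀ x, x ∈ LinearMap.ker Φ ↔ ∀ i, i < k + 2 → ψ ((f ^ i) x) = 0 := by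
    intro x
    rw [LinearMap.mem_ker, funext_iff, Fin.forall_iff]
    rfl
  have hdisj : Disjoint (LinearMap.ker Φ)
      (Submodule.span F (Set.range fun i : Fin (k + 2) => (f ^ i.val) v)) := by
    rw [Submodule.disjoint_def]
    intro x hx hxspan
    rw [hmem] at hx
    obtain ⟨c, rfl⟩ := (Submodule.mem_span_range_iff_exists_fun F).mp hxspan
    have hc : ∀ t, ∀ j : Fin (k + 2), j.val + t = k + 1 → c j = 0 := by
      intro t
      induction t using Nat.strong_induction_on with
      | _ t ih =>
        intro j hj
        have h := hx t (by omega)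
        rw [map_sum, map_sum, Finset.sum_eq_single j] at h
        · rw [map_smul, map_smul, ← Module.End.mul_apply, ← pow_add, hψv _ (by omega),
            if_pos (by omega)] at h
          simpa using h
        · intro i _ hij
          have hij' : i.val ≠ j.val := fun h => hij (Fin.ext h)
          rcases lt_or_gt_of_ne hij' with hlt | hgt
          · rw [map_smul, map_smul, ← Module.End.mul_apply, ← pow_add, hψv _ (by omega),
              if_neg (by omega), smul_zero]
          · rw [ih (k + 1 - i.val) (by omega) i (by omega), zero_smul, map_zero, map_zero]
        · simp
    exact Finset.sum_eq_zero fun j _ => by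
      rw [hc (k + 1 - j.val) j (by omega), zero_smul]
  refine ⟨k, v, LinearMap.ker Φ, fun x hx => ?_, hli, ?_, hdisj, ?_⟩
  · rw [hmem] at hx ⊢
    intro i hi
    rw [← Module.End.mul_apply, ← pow_succ]
    rcases Nat.lt_or_ge (i + 1) (k + 2) with h | h
    · exact hx _ h
    · rw [show i + 1 = k + 2 by omega, hpow, map_sum]
      exact Finset.sum_eq_zero fun j _ => by rw [map_smul, hx _ j.isLt, smul_zero]
  · rw [hpow]
    exact Submodule.sum_mem _ fun i _ =>
      Submodule.smul_mem _ _ (Submodule.subset_span (Set.mem_range_self i))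
  · rw [codisjoint_iff]
    refine Submodule.eq_top_of_disjoint _ _ ?_ hdisj
    have h1 := Φ.finrank_range_add_finrank_ker
    have h2 := Submodule.finrank_le (LinearMap.range Φ)
    rw [finrank_fin_fun] at h2
    rw [finrank_span_eq_card hli, Fintype.card_fin]
    omega

theorem hasSquareZeroSplitting_of_finrank [CharP F 2] (n : ℕ) :
    ∀ (V : Type*) [AddCommGroup V] [Module F V] [FiniteDimensional F V] (f : End F V),
      finrank F V = n → HasSquareZeroSplitting f := by
  induction n using Nat.strong_induction_on with
  | _ n ih =>
    intro V _ _ _ f hn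
    by_cases hf : ∀ c : F, f ≠ c • LinearMap.id
    swap
    · push Not at hf
      obtain ⟨c, rfl⟩ := hf
      exact hasSquareZeroSplitting_smul_id c
    obtain ⟨k, v, p, hp, hli, hlast, hcompl⟩ := exists_isCompl_cyclic f hf
    set q := Submodule.span F (Set.range fun i : Fin (k + 2) => (f ^ i.val) v) with hq
    have hstep : ∀ i : ℕ, f ((f ^ i) v) = (f ^ (i + 1)) v := fun i => by
      rw [← Module.End.mul_apply, ← pow_succ']
    have hqf : ∀ x ∈ q, f x ∈ q := by
      suffices h : q ≤ q.comap f from h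
      rw [hq, Submodule.span_le]
      rintro _ ⟨i, rfl⟩
      change f ((f ^ i.val) v) ∈ q
      rw [hstep]
      rcases Nat.lt_or_ge (i.val + 1) (k + 2) with h | h
      · exact Submodule.subset_span ⟨⟨i.val + 1, h⟩, rfl⟩
      · rwa [show i.val + 1 = k + 2 by omega]
    have hpn : finrank F p < n := by
      have h1 := Submodule.finrank_add_eq_of_isCompl hcompl
      rw [hq, finrank_span_eq_card hli, Fintype.card_fin] at h1
      omega
    have hfp := ih _ hpn p (f.restrict hp) rfl
    have hblock := hfp.prodMap (g := f.restrict hqf) (exists_graded_rank_one_blocks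
      (Basis.span hli) fun i => by
        ext
        rw [LinearMap.coe_restrict_apply, Basis.span_apply, Basis.span_apply]
        exact hstep i.val)
    refine hblock.of_equiv (Submodule.prodEquivOfIsCompl p q hcompl) fun x => ?_
    simp

theorem trace_eq_zero_of_mul_self_eq_zero {f : End F V} (hf : f * f = 0) :
    LinearMap.trace F V f = 0 :=
  (LinearMap.isNilpotent_trace_of_isNilpotent ⟨2, by rw [pow_two, hf]⟩).eq_zero

theorem HasSquareZeroSplitting.exists_add_add [FiniteDimensional F V] {f : End F V}
    (hf : HasSquareZeroSplitting f) (htr : LinearMap.trace F V f = 0) :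
    ∃ g h k : End F V, g * g = 0 ∧ h * h = 0 ∧ k * k = 0 ∧ f = g + h + k := by
  obtain ⟨π, N, u, φ, h1, h2, h3, h4, h5, h6, h7, h8⟩ := hf
  set X := f - N - φ.smulRight u with hX
  have hN : N * N = 0 := LinearMap.ext h2
  have hC : (π * X * (1 - π)) * (π * X * (1 - π)) = 0 := by
    ext x
    simp [h1]
  have hD : ((1 - π) * X * π) * ((1 - π) * X * π) = 0 := by
    ext x
    simp [h1]
  have hX1 : π * X * π = 0 := by
    ext x
    simp [hX, h5, h6, h7]
  have hX2 : (1 - π) * X * (1 - π) = 0 := by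
    ext x
    have h := h8 x
    rw [← sub_eq_zero] at h
    simp only [Module.End.mul_apply, LinearMap.sub_apply, Module.End.one_apply, hX,
      LinearMap.smulRight_apply, LinearMap.zero_apply, map_sub, map_smul, h5, h6] at h ⊢
    rw [← h]
    module
  have hsum : f = N + φ.smulRight u + π * X * (1 - π) + (1 - π) * X * π := by
    have hXsum : X = π * X * (1 - π) + (1 - π) * X * π := by
      calc X = π * X * π + (1 - π) * X * (1 - π) + (π * X * (1 - π) + (1 - π) * X * π) := by
            noncomm_ring
        _ = _ := by rw [hX1, hX2, zero_add, zero_add]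
    rw [add_assoc, ← hXsum, hX]
    abel
  have hφu : φ u = 0 := by
    rw [hsum, map_add, map_add, map_add, trace_eq_zero_of_mul_self_eq_zero hN,
      trace_eq_zero_of_mul_self_eq_zero hC, trace_eq_zero_of_mul_self_eq_zero hD,
      LinearMap.trace_smulRight] at htr
    simpa using htr
  refine ⟨N + φ.smulRight u, π * X * (1 - π), (1 - π) * X * π, ?_, hC, hD, hsum⟩
  ext x
  simp [h2, h3, h4, hφu]

end

/-- Over a field of characteristic 2, every trace-zero square matrix is the
sum of three square-zero matrices. -/
theorem trace_zero_sum_three_square_zero_char_two (F : Type*) [Field F] [CharP F 2]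
    (n : ℕ) (A : Matrix (Fin n) (Fin n) F) (hA : A.trace = 0) :
    ∃ B C D : Matrix (Fin n) (Fin n) F,
      B ^ 2 = 0 ∧ C ^ 2 = 0 ∧ D ^ 2 = 0 ∧ A = B + C + D := by
  obtain ⟨g, h, k, hg, hh, hk, hsum⟩ :=
    (hasSquareZeroSplitting_of_finrank _ _ (Matrix.toLin' A) rfl).exists_add_add
      (by rw [Matrix.trace_toLin'_eq, hA])
  have hsq : ∀ l : Module.End F (Fin n → F), l * l = 0 → LinearMap.toMatrix' l ^ 2 = 0 := by
    intro l hl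
    rw [pow_two, ← LinearMap.toMatrix'_mul, hl, map_zero]
  refine ⟨_, _, _, hsq g hg, hsq h hh, hsq k hk, ?_⟩
  rw [← map_add, ← map_add, ← hsum, LinearMap.toMatrix'_toLin']
end

section
/- Let F be a field of characteristic 2 and A ∈ Mat_n(F) a matrix whose trace is 0 or 1. Then A ⊕ 0_n is the sum of three idempotent matrices in Mat_{2n}(F). -/
namespace TraceIdempotents

open Matrix Polynomial

/-- A row `φ` is a cyclic covector for `s` if every row is of the form `φ * p(s)`. -/
def IsCyclicCovector {F ι : Type*} [Field F] [Fintype ι] [DecidableEq ι]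
    (s : Matrix ι ι F) (φ : Matrix Unit ι F) : Prop :=
  ∀ ψ : Matrix Unit ι F, ∃ p : F[X], φ * aeval s p = ψ

variable {F ι κ : Type*} [Field F] [Fintype ι] [DecidableEq ι] [Fintype κ] [DecidableEq κ]

lemma exists_trace_mul_eq (f : Matrix ι ι F →ₗ[F] F) :
    ∃ c : Matrix ι ι F, ∀ x, f x = (c * x).trace := by
  refine ⟨of fun i j => f (single j i 1), fun x => ?_⟩
  conv_lhs => rw [matrix_eq_sum_single x]
  have h (i j : ι) : f (single i j (x i j)) = x i j * f (single i j 1) := by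
    rw [← smul_eq_mul, ← map_smul, smul_single, smul_eq_mul, mul_one]
  simp only [map_sum, h, Matrix.trace, diag_apply, mul_apply, of_apply]
  rw [Finset.sum_comm]
  exact Finset.sum_congr rfl fun _ _ => Finset.sum_congr rfl fun _ _ => mul_comm _ _

lemma row_ext_of_forall_mul {A B : Matrix ι ι F}
    (h : ∀ ψ : Matrix Unit ι F, ψ * A = ψ * B) : A = B := by
  ext i j
  simpa using congrFun₂ (h (single () i 1)) () j

/-- The centralizer of a matrix with a cyclic covector consists of polynomials in that matrix. -/
lemma IsCyclicCovector.exists_aeval_eq_of_commute {s c : Matrix ι ι F} {φ : Matrix Unit ι F}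
    (hφ : IsCyclicCovector s φ) (hc : Commute c s) : ∃ p : F[X], c = aeval s p := by
  obtain ⟨p, hp⟩ := hφ (φ * c)
  refine ⟨p, row_ext_of_forall_mul fun ψ => ?_⟩
  obtain ⟨q, rfl⟩ := hφ ψ
  have hq : Commute c (aeval s q) := by
    induction q using Polynomial.induction_on' with
    | add p q hp hq => simpa using hp.add_right hq
    | monomial n a =>
      rw [aeval_monomial, ← Algebra.smul_def]
      exact (hc.pow_right n).smul_right a
  rw [Matrix.mul_assoc, Matrix.mul_assoc, ← hq.eq, ← Matrix.mul_assoc, ← hp, Matrix.mul_assoc,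
    ← map_mul, ← map_mul, mul_comm]

/-- The image of the commutator with a matrix that has a cyclic covector is the orthogonal of its
powers for the trace form. -/
lemma IsCyclicCovector.exists_commutator_eq {s h : Matrix ι ι F} {φ : Matrix Unit ι F}
    (hφ : IsCyclicCovector s φ) (hh : ∀ k : ℕ, (h * s ^ k).trace = 0) (γ : Matrix Unit ι F) :
    ∃ v : Matrix ι ι F, h = s * v - v * s ∧ φ * v = γ := by
  let ad : Matrix ι ι F →ₗ[F] Matrix ι ι F :=
    LinearMap.mulLeft F s - LinearMap.mulRight F s
  have had : h ∈ LinearMap.range ad := by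
    by_contra hn
    obtain ⟨f, hf, hle⟩ := Submodule.exists_le_ker_of_notMem hn
    obtain ⟨c, hc⟩ := exists_trace_mul_eq f
    have hcs : Commute c s := by
      refine ext_iff_trace_mul_right.2 fun x => ?_
      have h1 : f (s * x - x * s) = 0 := hle ⟨x, rfl⟩
      rw [hc, mul_sub, trace_sub, sub_eq_zero] at h1
      rw [mul_assoc, h1, ← mul_assoc, trace_mul_comm, mul_assoc]
    obtain ⟨p, rfl⟩ := hφ.exists_aeval_eq_of_commute hcs
    apply hf
    rw [hc, trace_mul_comm]
    clear hc hcs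
    induction p using Polynomial.induction_on' with
    | add p q hp hq => rw [map_add, mul_add, trace_add, hp, hq, add_zero]
    | monomial n a =>
      rw [aeval_monomial, ← Algebra.smul_def, mul_smul_comm, trace_smul, hh, smul_zero]
  obtain ⟨v, rfl⟩ := had
  obtain ⟨p, hp⟩ := hφ (γ - φ * v)
  refine ⟨v + aeval s p, ?_, by rw [Matrix.mul_add, hp]; abel⟩
  have := (Polynomial.commute_X p).map (aeval s)
  simp only [aeval_X] at this
  simp only [ad, LinearMap.sub_apply, LinearMap.mulLeft_apply, LinearMap.mulRight_apply, mul_add,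
    add_mul, this.eq]
  abel

lemma mul_mul_pow_of_mul_eq_one (s : Matrix κ κ F) {T : Matrix ι κ F} {T' : Matrix κ ι F}
    (h' : T' * T = 1) (h : T * T' = 1) (k : ℕ) : (T * s * T') ^ k = T * s ^ k * T' := by
  induction k with
  | zero => simp [h]
  | succ k ih =>
    rw [pow_succ, ih, pow_succ]
    simp only [Matrix.mul_assoc]
    rw [← Matrix.mul_assoc T' T, h', Matrix.one_mul]

lemma IsCyclicCovector.conj {s : Matrix κ κ F} {φ : Matrix Unit κ F}
    (hφ : IsCyclicCovector s φ) {T : Matrix ι κ F} {T' : Matrix κ ι F}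
    (h' : T' * T = 1) (h : T * T' = 1) : IsCyclicCovector (T * s * T') (φ * T') := by
  have key (p : F[X]) : aeval (T * s * T') p * T = T * aeval s p := by
    induction p using Polynomial.induction_on' with
    | add p q hp hq => simp [Matrix.add_mul, Matrix.mul_add, hp, hq]
    | monomial n a =>
      rw [aeval_monomial, aeval_monomial, ← Algebra.smul_def, ← Algebra.smul_def,
        mul_mul_pow_of_mul_eq_one s h' h, Matrix.smul_mul, Matrix.mul_smul, Matrix.mul_assoc _ T' T,
        h', Matrix.mul_one]
  intro ψ
  obtain ⟨p, hp⟩ := hφ (ψ * T)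
  refine ⟨p, ?_⟩
  rw [← Matrix.mul_one (φ * T' * _), ← h, ← Matrix.mul_assoc, Matrix.mul_assoc (φ * T'), key,
    Matrix.mul_assoc φ, ← Matrix.mul_assoc T', h', Matrix.one_mul, hp, Matrix.mul_assoc, h,
    Matrix.mul_one]

lemma exists_mul_eq_single (e₀ : ι ≃ κ) (i₀ : κ) {g : Matrix ι Unit F} (hg : g ≠ 0) :
    ∃ (T : Matrix ι κ F) (T' : Matrix κ ι F), T' * T = 1 ∧ T * T' = 1 ∧
      T' * g = single i₀ () 1 := by
  obtain ⟨j, hj⟩ : ∃ j, g j () ≠ 0 := by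
    by_contra! h
    exact hg (by ext i ⟨⟩; exact h i)
  let e : κ ≃ ι := e₀.symm.trans (Equiv.swap (e₀.symm i₀) j)
  have he : e i₀ = j := by simp [e]
  let U : Matrix ι ι F := updateCol 1 j fun i => g i ()
  have hU : IsUnit U.det := by
    have : U.det = g j () := by
      rw [← cramer_apply, cramer_one]; rfl
    rw [this]; exact hj.isUnit
  have hUg : U⁻¹ * g = single j () 1 := by
    have : g = U * single j () (1 : F) := by
      ext i ⟨⟩
      simp [U]
    rw [this, ← Matrix.mul_assoc, nonsing_inv_mul _ hU, Matrix.one_mul]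
  refine ⟨U.submatrix id e, U⁻¹.submatrix e id, ?_, ?_, ?_⟩
  · rw [← submatrix_mul _ _ _ _ _ Function.bijective_id, nonsing_inv_mul _ hU]
    simp
  · rw [← submatrix_mul _ _ _ _ _ e.bijective, mul_nonsing_inv _ hU]
    simp
  · have : U⁻¹.submatrix e id * g = (U⁻¹ * g).submatrix e id := by
      rw [submatrix_mul _ _ _ _ _ Function.bijective_id]; simp
    rw [this, hUg]
    ext i ⟨⟩
    simp [single_apply, ← he]

/-- The nilpotent lower shift matrix. -/
def lowerShift (F : Type*) [Field F] (m : ℕ) : Matrix (Fin m) (Fin m) F :=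
  of fun i j => if (i : ℕ) = j + 1 then 1 else 0

lemma lowerShift_pow_apply (m k : ℕ) (i j : Fin m) :
    (lowerShift F m ^ k) i j = if (i : ℕ) = j + k then 1 else 0 := by
  induction k generalizing i with
  | zero => simp [one_apply, Fin.ext_iff]
  | succ k ih =>
    rw [pow_succ', mul_apply]
    simp only [ih, mul_ite, mul_one, mul_zero]
    by_cases h : (i : ℕ) = j + (k + 1)
    · rw [if_pos h, Finset.sum_eq_single ⟨j + k, by omega⟩]
      · simp [lowerShift, h, add_assoc]
      · intro b _ hb
        rw [if_neg fun h' => hb (Fin.ext h')]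
      · simp
    · rw [if_neg h]
      refine Finset.sum_eq_zero fun b _ => ?_
      split_ifs with hb
      · exact if_neg (by omega)
      · rfl

lemma lowerShift_pow_self (m : ℕ) {k : ℕ} (hk : m ≤ k) : lowerShift F m ^ k = 0 := by
  ext i j
  rw [lowerShift_pow_apply, if_neg (by omega), Matrix.zero_apply]

lemma isCyclicCovector_lowerShift (m : ℕ) :
    IsCyclicCovector (lowerShift F (m + 1)) (single () (Fin.last m) 1) := by
  intro ψ
  refine ⟨∑ j : Fin (m + 1), monomial (m - j) (ψ () j), ?_⟩
  ext ⟨⟩ i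
  simp only [map_sum, aeval_monomial, ← Algebra.smul_def]
  simp only [single_mul_apply_same, one_mul, Matrix.sum_apply, Matrix.smul_apply,
    lowerShift_pow_apply, smul_eq_mul, mul_ite, mul_one, mul_zero, Fin.val_last]
  rw [Finset.sum_eq_single i]
  · rw [if_pos (by omega)]
  · intro b _ hb
    rw [if_neg fun h => hb (Fin.ext (by omega))]
  · simp

/-- Every nonzero column is a cyclic vector of a nilpotent matrix with a cyclic covector. -/
lemma exists_isNilpotent_isCyclicCovector (m : ℕ) {g : Matrix (Fin (m + 1)) Unit F} (hg : g ≠ 0) :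
    ∃ (N : Matrix (Fin (m + 1)) (Fin (m + 1)) F) (ρ : Matrix Unit (Fin (m + 1)) F),
      IsNilpotent N ∧ IsCyclicCovector N ρ ∧ ∀ h : Matrix (Fin (m + 1)) (Fin (m + 1)) F,
        ∃ σ : Matrix Unit (Fin (m + 1)) F, ∀ k : ℕ, (σ * N ^ k * g).trace = (h * N ^ k).trace := by
  obtain ⟨T, T', h', h, hT⟩ := exists_mul_eq_single (Equiv.refl _) (0 : Fin (m + 1)) hg
  refine ⟨T * lowerShift F (m + 1) * T', _, ⟨m + 1, ?_⟩,
    (isCyclicCovector_lowerShift m).conj h' h, fun x => ?_⟩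
  · rw [mul_mul_pow_of_mul_eq_one _ h' h, lowerShift_pow_self _ le_rfl, mul_zero, zero_mul]
  · refine ⟨(of fun _ (j : Fin (m + 1)) =>
        (x * (T * lowerShift F (m + 1) ^ (j : ℕ) * T')).trace) * T',
      fun k => ?_⟩
    rw [mul_mul_pow_of_mul_eq_one _ h' h, Matrix.mul_assoc _ _ g, Matrix.mul_assoc _ T' g, hT,
      Matrix.mul_assoc _ T', ← Matrix.mul_assoc T', ← Matrix.mul_assoc T', h', Matrix.one_mul]
    rw [← Matrix.mul_assoc]
    generalize hτ : (of fun (_ : Unit) (j : Fin (m + 1)) =>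
      (x * (T * lowerShift F (m + 1) ^ (j : ℕ) * T')).trace) = τ
    have hentry : (τ * lowerShift F (m + 1) ^ k *
        single (0 : Fin (m + 1)) () (1 : F)).trace =
        ∑ i : Fin (m + 1), if (i : ℕ) = k then τ () i else 0 := by
      simp [Matrix.trace, Matrix.mul_apply (M := τ), lowerShift_pow_apply]
    rw [hentry]
    by_cases hk : k < m + 1
    · rw [Finset.sum_eq_single ⟨k, hk⟩ (fun b _ hb => if_neg fun h => hb (Fin.ext h)) (by simp)]
      simp [← hτ]
    · rw [lowerShift_pow_self _ (by omega), Finset.sum_eq_zero fun i _ => if_neg (by omega)]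
      simp

/-- There is a matrix `s` with a cyclic covector, fixing `g`, along whose powers the trace of `h`
is constant. -/
def HasTraceConstantPowers (h : Matrix ι ι F) (g : Matrix ι Unit F) : Prop :=
  ∃ (s : Matrix ι ι F) (φ : Matrix Unit ι F), IsCyclicCovector s φ ∧ s * g = g ∧ φ * g = 1 ∧
    ∀ k : ℕ, (h * s ^ k).trace = h.trace

lemma HasTraceConstantPowers.of_conj {h : Matrix ι ι F} {g : Matrix ι Unit F}
    {T : Matrix ι κ F} {T' : Matrix κ ι F} (hT' : T' * T = 1) (hT : T * T' = 1)
    (H : HasTraceConstantPowers (T' * h * T) (T' * g)) : HasTraceConstantPowers h g := by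
  obtain ⟨s, φ, hc, hs, hφ, htr⟩ := H
  refine ⟨T * s * T', φ * T', hc.conj hT' hT, ?_, by rwa [Matrix.mul_assoc], fun k => ?_⟩
  · rw [Matrix.mul_assoc, Matrix.mul_assoc, hs, ← Matrix.mul_assoc, hT, Matrix.one_mul]
  · have := htr k
    rw [trace_mul_comm _ T, ← Matrix.mul_assoc, hT, Matrix.one_mul] at this
    rw [← this, mul_mul_pow_of_mul_eq_one _ hT' hT, ← Matrix.mul_assoc, trace_mul_comm]
    simp only [Matrix.mul_assoc]

lemma trace_fromBlocks_eq {F ι κ : Type*} [Field F] [Fintype ι] [Fintype κ]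
    (A : Matrix ι ι F) (B : Matrix ι κ F) (C : Matrix κ ι F) (D : Matrix κ κ F) :
    (fromBlocks A B C D).trace = A.trace + D.trace := by
  simp [Matrix.trace, Fintype.sum_sum_type]

lemma hasTraceConstantPowers_fromBlocks (c : Matrix Unit Unit F) (β : Matrix Unit κ F)
    (g' : Matrix κ Unit F) (h' : Matrix κ κ F) {s' : Matrix κ κ F} (σ ψ : Matrix Unit κ F)
    (hc : IsCyclicCovector s' (σ + ψ * s' - ψ))
    (hσ : ∀ k : ℕ, (σ * s' ^ k * g').trace = (h' * s' ^ k).trace - (h' * s' ^ (k + 1)).trace) :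
    HasTraceConstantPowers (fromBlocks c β g' h') (single (Sum.inl ()) () 1) := by
  have hsingle : (single (Sum.inl ()) () 1 : Matrix (Unit ⊕ κ) Unit F) = fromRows 1 0 := by
    ext (i | i) j <;> simp [one_apply]
  rw [hsingle]
  have hpow (k : ℕ) : (fromBlocks (1 : Matrix Unit Unit F) σ 0 s' - 1) * fromBlocks 1 σ 0 s' ^ k =
      fromBlocks 0 (σ * s' ^ k) 0 ((s' - 1) * s' ^ k) := by
    induction k with
    | zero =>
      simp only [pow_zero, mul_one]
      rw [← fromBlocks_one, sub_eq_add_neg, fromBlocks_neg, fromBlocks_add]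
      simp [sub_eq_add_neg]
    | succ k ih =>
      rw [pow_succ, ← mul_assoc, ih, fromBlocks_multiply]
      simp [pow_succ, mul_assoc, Matrix.mul_assoc]
  refine ⟨fromBlocks 1 σ 0 s', fromCols 1 ψ, ?_, ?_, ?_, fun k => ?_⟩
  · intro χ
    obtain ⟨x, χ, rfl⟩ : ∃ (x : F) (χ' : Matrix Unit κ F),
        χ = fromCols (x • (1 : Matrix Unit Unit F)) χ' :=
      ⟨χ () (Sum.inl ()), of fun _ j => χ () (Sum.inr j), by
        ext ⟨⟩ (i | i) <;> simp⟩
    obtain ⟨p, hp⟩ := hc (χ - x • ψ)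
    have key (u : Matrix Unit κ F) (p : F[X]) :
        (fromCols (0 : Matrix Unit Unit F) u : Matrix Unit (Unit ⊕ κ) F) *
            (aeval (fromBlocks (1 : Matrix Unit Unit F) σ 0 s' :
              Matrix (Unit ⊕ κ) (Unit ⊕ κ) F) p) =
          fromCols (0 : Matrix Unit Unit F) (u * aeval s' p) := by
      induction p using Polynomial.induction_on' with
      | add p q hp hq =>
        rw [map_add, map_add, Matrix.mul_add, Matrix.mul_add, hp, hq]
        ext i (j | j) <;> simp
      | monomial n a =>
        rw [aeval_monomial, aeval_monomial, ← Algebra.smul_def, ← Algebra.smul_def,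
          Matrix.mul_smul, Matrix.mul_smul]
        have : (fromCols (0 : Matrix Unit Unit F) u : Matrix Unit (Unit ⊕ κ) F) *
            (fromBlocks 1 σ 0 s' : Matrix (Unit ⊕ κ) (Unit ⊕ κ) F) ^ n =
            fromCols (0 : Matrix Unit Unit F) (u * s' ^ n) := by
          induction n with
          | zero => simp
          | succ n ih =>
            rw [pow_succ, ← Matrix.mul_assoc, ih, fromCols_mul_fromBlocks]
            simp [pow_succ, Matrix.mul_assoc]
        rw [this]
        ext i (j | j) <;> simp
    have hsub : (fromCols (1 : Matrix Unit Unit F) ψ : Matrix Unit (Unit ⊕ κ) F) *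
        ((fromBlocks (1 : Matrix Unit Unit F) σ 0 s' : Matrix (Unit ⊕ κ) (Unit ⊕ κ) F) - 1) =
        fromCols (0 : Matrix Unit Unit F) (σ + ψ * s' - ψ) := by
      rw [Matrix.mul_sub, fromCols_mul_fromBlocks, Matrix.mul_one]
      ext i (j | j) <;> simp
    refine ⟨C x + (X - 1) * p, ?_⟩
    rw [map_add, map_mul, map_sub, aeval_X, aeval_C, map_one, Matrix.mul_add, ← Matrix.mul_assoc,
      hsub, key, hp, Algebra.algebraMap_eq_smul_one, Matrix.mul_smul, Matrix.mul_one]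
    ext i (j | j) <;> simp
  · rw [fromBlocks_mul_fromRows]; simp
  · rw [fromCols_mul_fromRows]; simp
  · induction k with
    | zero => simp
    | succ k ih =>
      rw [← ih, ← sub_eq_zero, ← trace_sub, ← mul_sub, pow_succ', ← sub_one_mul, hpow,
        fromBlocks_multiply]
      have h1 := hσ k
      rw [trace_mul_comm, ← Matrix.mul_assoc] at h1
      simp only [trace_fromBlocks_eq, Matrix.mul_zero, add_zero, trace_zero, zero_add, trace_add,
        h1, sub_mul, mul_sub, trace_sub, one_mul, pow_succ', ← Matrix.mul_assoc g']
      ring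

/-- Every square matrix has trace constant along the powers of some matrix with a cyclic covector
and a prescribed nonzero fixed column. -/
theorem hasTraceConstantPowers (m : ℕ) (h : Matrix (Fin (m + 1)) (Fin (m + 1)) F)
    {g : Matrix (Fin (m + 1)) Unit F} (hg : g ≠ 0) : HasTraceConstantPowers h g := by
  induction m with
  | zero =>
    obtain ⟨T, T', hT', hT, hTg⟩ := exists_mul_eq_single
      ((Fintype.equivFinOfCardEq (α := Unit ⊕ Fin 0) (by simp)).symm) (Sum.inl ()) hg
    apply HasTraceConstantPowers.of_conj hT' hT
    rw [hTg, ← fromBlocks_toBlocks (T' * h * T)]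
    exact hasTraceConstantPowers_fromBlocks (s' := 0) _ _ _ _ 0 0
      (fun ψ => ⟨0, Subsingleton.elim _ _⟩) fun k => by simp [Matrix.trace]
  | succ m ih =>
    obtain ⟨T, T', hT', hT, hTg⟩ := exists_mul_eq_single
      ((Fintype.equivFinOfCardEq (α := Unit ⊕ Fin (m + 1)) (by simp [add_comm])).symm)
      (Sum.inl ()) hg
    apply HasTraceConstantPowers.of_conj hT' hT
    rw [hTg, ← fromBlocks_toBlocks (T' * h * T)]
    generalize (T' * h * T).toBlocks₂₁ = g'
    generalize (T' * h * T).toBlocks₂₂ = h'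
    by_cases hg' : g' = 0
    · obtain ⟨s', ρ, hc, -, -, htr⟩ := ih h' (g := single 0 () 1)
        fun h0 => one_ne_zero (α := F) (by simpa using congrFun₂ h0 0 ())
      refine hasTraceConstantPowers_fromBlocks (s' := s') _ _ _ _ ρ 0 (by simpa using hc)
        fun k => ?_
      rw [htr, htr, hg', Matrix.mul_zero, trace_zero, sub_self]
    · obtain ⟨N, ρ, hN, hc, hσ⟩ := exists_isNilpotent_isCyclicCovector m hg'
      obtain ⟨σ, hσ⟩ := hσ ((1 - N) * h')
      obtain ⟨u, hu⟩ := hN.isUnit_sub_one.exists_left_inv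
      refine hasTraceConstantPowers_fromBlocks (s' := N) _ _ _ _ σ
        ((ρ - σ) * u) ?_ fun k => ?_
      · have : σ + (ρ - σ) * u * N - (ρ - σ) * u = ρ := by
          rw [add_sub_assoc, Matrix.mul_assoc, ← Matrix.mul_sub, ← mul_sub_one, hu, Matrix.mul_one]
          abel
        rwa [this]
      · rw [hσ, sub_mul, sub_mul, one_mul, trace_sub, mul_assoc N, trace_mul_comm N, mul_assoc,
          pow_succ]

/-- `B` is the sum of an idempotent `d` and an anticommutator `s * v + v * s`, where `d` fixes `v`
on the left and `s` on the right. -/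
def IsIdempotentAddAnticommutator (B : Matrix ι ι F) : Prop :=
  ∃ d s v : Matrix ι ι F, d * d = d ∧ d * v = v ∧ s * d = s ∧ B = d + s * v + v * s

lemma IsIdempotentAddAnticommutator.of_conj {B : Matrix ι ι F}
    {T : Matrix ι κ F} {T' : Matrix κ ι F} (hT' : T' * T = 1) (hT : T * T' = 1)
    (H : IsIdempotentAddAnticommutator (T' * B * T)) : IsIdempotentAddAnticommutator B := by
  obtain ⟨d, s, v, hd, hv, hs, hB⟩ := H
  have key (x y : Matrix κ κ F) : T * x * T' * (T * y * T') = T * (x * y) * T' := by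
    simp only [Matrix.mul_assoc]
    rw [← Matrix.mul_assoc T' T, hT', Matrix.one_mul]
  refine ⟨T * d * T', T * s * T', T * v * T', by rw [key, hd], by rw [key, hv], by rw [key, hs], ?_⟩
  rw [key, key, ← Matrix.add_mul, ← Matrix.mul_add, ← Matrix.add_mul, ← Matrix.mul_add, ← hB]
  simp only [Matrix.mul_assoc]
  rw [hT, ← Matrix.mul_assoc, hT, Matrix.one_mul, Matrix.mul_one]

lemma isIdempotentAddAnticommutator_of_trace_eq_card [CharP F 2] {m : ℕ}
    (B : Matrix (Fin m) (Fin m) F) (hB : B.trace = m) : IsIdempotentAddAnticommutator B := by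
  obtain _ | m := m
  · exact ⟨0, 0, 0, Subsingleton.elim _ _, Subsingleton.elim _ _, Subsingleton.elim _ _,
      Subsingleton.elim _ _⟩
  · obtain ⟨s, φ, hc, -, -, htr⟩ := hasTraceConstantPowers m (B - 1) (g := single 0 () 1)
      fun h0 => one_ne_zero (α := F) (by simpa using congrFun₂ h0 0 ())
    obtain ⟨v, hv, -⟩ := hc.exists_commutator_eq (h := B - 1)
      (fun k => by rw [htr, trace_sub, hB, trace_one, Fintype.card_fin, sub_self]) 0
    refine ⟨1, s, v, one_mul _, one_mul _, mul_one _, ?_⟩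
    rw [← CharTwo.sub_eq_add, add_sub_assoc, ← hv, add_sub_cancel]

lemma isIdempotentAddAnticommutator_fromBlocks [CharP F 2] {m : ℕ}
    (a : Matrix (Fin m) (Fin m) F) {α : Matrix (Fin m) Unit F} (hα : α ≠ 0)
    (γ : Matrix Unit (Fin m) F) (ha : a.trace = m + 1) :
    IsIdempotentAddAnticommutator (fromBlocks 1 γ α a) := by
  obtain _ | m := m
  · exact absurd (Subsingleton.elim _ _) hα
  obtain ⟨s, φ, hc, hs, hφ, htr⟩ := hasTraceConstantPowers m (a - 1) hα
  have hpow (k : ℕ) : s ^ k * α = α := by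
    induction k with
    | zero => simp
    | succ k ih => rw [pow_succ, Matrix.mul_assoc, hs, ih]
  obtain ⟨v, hv, hφv⟩ := hc.exists_commutator_eq (h := a - 1 - α * φ) (fun k => by
    rw [sub_mul, trace_sub, htr, trace_sub, ha, trace_one, Fintype.card_fin, trace_mul_comm,
      ← Matrix.mul_assoc, hpow, trace_mul_comm, hφ]
    simp) γ
  refine ⟨fromBlocks 0 0 0 1, fromBlocks 0 φ 0 s, fromBlocks 0 0 α v, ?_, ?_, ?_, ?_⟩
  · simp [fromBlocks_multiply]
  · simp [fromBlocks_multiply]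
  · simp [fromBlocks_multiply]
  · have : a = 1 + s * v + (α * φ + v * s) := by
      rw [CharTwo.sub_eq_add (s * v)] at hv
      rw [eq_add_of_sub_eq (eq_add_of_sub_eq hv)]
      abel
    simp [fromBlocks_multiply, fromBlocks_add, hs, hφ, hφv, ← this]

lemma isIdempotentAddAnticommutator_of_trace_eq_card_add_one [CharP F 2] {m : ℕ}
    (B : Matrix (Fin m) (Fin m) F) (hB : B.trace = m + 1) : IsIdempotentAddAnticommutator B := by
  obtain _ | m := m
  · exact ⟨0, 0, 0, Subsingleton.elim _ _, Subsingleton.elim _ _, Subsingleton.elim _ _,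
      Subsingleton.elim _ _⟩
  by_cases hsc : ∃ c : F, B = c • 1
  · obtain ⟨c, rfl⟩ := hsc
    have h2 : (2 : F) = 0 := CharTwo.two_eq_zero
    obtain hm | hm : ((m + 1 : ℕ) : F) = 0 ∨ ((m + 1 : ℕ) : F) = 1 := by
      obtain ⟨k, hk⟩ | ⟨k, hk⟩ := Nat.even_or_odd (m + 1)
      · left; rw [hk]; push_cast; linear_combination (k : F) * h2
      · right; rw [hk]; push_cast; linear_combination (k : F) * h2
    · simp [trace_smul, trace_one, hm] at hB
    · have hc : c = 0 := by
        rw [trace_smul, trace_one, Fintype.card_fin, hm] at hB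
        simpa [CharTwo.add_self_eq_zero] using hB
      exact ⟨0, 0, 0, by simp [hc]⟩
  · obtain ⟨e, he⟩ : ∃ e : Matrix (Fin (m + 1)) Unit F, ∀ c : F, B * e ≠ c • e := by
      by_contra! hcon
      obtain ⟨c, hc⟩ := LinearMap.exists_eq_smul_id_of_forall_notLinearIndependent
        (f := B.toLin') fun v hv => by
          obtain ⟨c, hc⟩ := hcon (replicateCol Unit v)
          have : B.toLin' v = c • v := by
            ext i
            simpa [Matrix.mul_apply, mulVec, dotProduct] using congrFun₂ hc i ()
          rw [LinearIndependent.pair_iff] at hv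
          exact one_ne_zero (neg_eq_zero.1 (hv c (-1) (by simp [this])).2)
      refine hsc ⟨c, ?_⟩
      apply Matrix.toLin'.injective
      rw [hc, map_smul, toLin'_one, Module.End.one_eq_id]
    have he0 : e ≠ 0 := fun h => he 0 (by simp [h])
    obtain ⟨T, T', hT', hT, hTe⟩ := exists_mul_eq_single
      ((Fintype.equivFinOfCardEq (α := Unit ⊕ Fin m) (by simp [add_comm])).symm) (Sum.inl ()) he0
    apply IsIdempotentAddAnticommutator.of_conj hT' hT
    have htr : (T' * B * T).trace = m := by
      rw [trace_mul_comm, ← Matrix.mul_assoc, hT, Matrix.one_mul, hB]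
      push_cast
      rw [add_assoc, CharTwo.add_self_eq_zero, add_zero]
    have hα : (T' * B * T).toBlocks₂₁ ≠ 0 := by
      intro h0
      apply he ((T' * B * T) (Sum.inl ()) (Sum.inl ()))
      have hcol : T' * B * T * T' * e = (T' * B * T) (Sum.inl ()) (Sum.inl ()) • (T' * e) := by
        rw [Matrix.mul_assoc _ T', hTe]
        ext (⟨⟨⟩⟩ | i) ⟨⟩
        · simp
        · simpa [toBlocks₂₁] using congrFun₂ h0 i ()
      calc B * e = T * (T' * B * T * T' * e) := by
            rw [Matrix.mul_assoc _ T, hT, Matrix.mul_one]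
            simp only [← Matrix.mul_assoc]
            rw [hT, Matrix.one_mul]
        _ = _ := by rw [hcol, Matrix.mul_smul, ← Matrix.mul_assoc, hT, Matrix.one_mul]
    rw [← fromBlocks_toBlocks (T' * B * T)] at htr ⊢
    generalize (T' * B * T).toBlocks₂₁ = α at *
    generalize (T' * B * T).toBlocks₂₂ = a at *
    generalize (T' * B * T).toBlocks₁₁ = δ at *
    generalize (T' * B * T).toBlocks₁₂ = γ at *
    obtain ⟨x, hx⟩ : ∃ x : Matrix Unit (Fin m) F, δ + x * α = 1 := by
      obtain ⟨j, hj⟩ : ∃ j, α j () ≠ 0 := by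
        by_contra! h
        exact hα (by ext i ⟨⟩; exact h i)
      refine ⟨single () j ((1 - δ () ()) / α j ()), ?_⟩
      ext ⟨⟩ ⟨⟩
      simp [hj]
    have hxx : (fromBlocks 1 x 0 1 : Matrix (Unit ⊕ Fin m) (Unit ⊕ Fin m) F) *
        fromBlocks 1 x 0 1 = 1 := by
      have : x + x = 0 := by
        ext i j
        exact CharTwo.add_self_eq_zero _
      simp [fromBlocks_multiply, this]
    apply IsIdempotentAddAnticommutator.of_conj (T := fromBlocks 1 x 0 1) (T' := fromBlocks 1 x 0 1)
      hxx hxx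
    simp only [fromBlocks_multiply, Matrix.one_mul, Matrix.mul_one, Matrix.mul_zero, add_zero,
      Matrix.zero_mul, zero_add, hx]
    apply isIdempotentAddAnticommutator_fromBlocks _ hα
    rw [trace_fromBlocks_eq] at htr
    have htx := congrArg Matrix.trace hx
    simp only [trace_add, trace_mul_comm x, trace_one, Fintype.card_unit, Nat.cast_one] at htx ⊢
    linear_combination htr + htx - δ.trace * CharTwo.two_eq_zero (R := F)

lemma isIdempotentAddAnticommutator [CharP F 2] {m : ℕ} (B : Matrix (Fin m) (Fin m) F)
    (hB : B.trace = 0 ∨ B.trace = 1) : IsIdempotentAddAnticommutator B := by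
  have hm : (m : F) = 0 ∨ (m : F) = 1 := by
    have h2 : (2 : F) = 0 := CharTwo.two_eq_zero
    obtain ⟨k, hk⟩ | ⟨k, hk⟩ := Nat.even_or_odd m
    · left; rw [hk]; push_cast; linear_combination (k : F) * h2
    · right; rw [hk]; push_cast; linear_combination (k : F) * h2
  have h2 : (1 : F) + 1 = 0 := CharTwo.add_self_eq_zero 1
  by_cases h : B.trace = m
  · exact isIdempotentAddAnticommutator_of_trace_eq_card B h
  · refine isIdempotentAddAnticommutator_of_trace_eq_card_add_one B ?_
    obtain h0 | h0 := hm <;> obtain h1 | h1 := hB <;> simp_all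

/-- Rank factorization. -/
lemma exists_rank_factorization (A : Matrix ι ι F) :
    ∃ (r : ℕ) (G K : Matrix ι (Fin r) F) (H Z : Matrix (Fin r) ι F),
      A = G * H ∧ H * K = 1 ∧ Z * G = 1 := by
  let e := (Module.finBasis F (LinearMap.range A.toLin')).equivFun
  let f : (ι → F) →ₗ[F] _ := e.toLinearMap ∘ₗ A.toLin'.rangeRestrict
  let g := (LinearMap.range A.toLin').subtype ∘ₗ e.symm.toLinearMap
  have hf : LinearMap.range f = ⊤ := LinearMap.range_eq_top.2
    (e.surjective.comp A.toLin'.surjective_rangeRestrict)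
  have hg : LinearMap.ker g = ⊥ := LinearMap.ker_eq_bot.2
    (Subtype.val_injective.comp e.symm.injective)
  obtain ⟨k, hk⟩ := f.exists_rightInverse_of_surjective hf
  obtain ⟨z, hz⟩ := g.exists_leftInverse_of_injective hg
  refine ⟨_, LinearMap.toMatrix' g, LinearMap.toMatrix' k, LinearMap.toMatrix' f,
    LinearMap.toMatrix' z, ?_, ?_, ?_⟩
  · rw [← LinearMap.toMatrix'_comp]
    apply Matrix.toLin'.injective
    rw [toLin'_toMatrix']
    refine LinearMap.ext fun x => ?_
    simp [f, g]
  · rw [← LinearMap.toMatrix'_comp, hk, LinearMap.toMatrix'_id]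
  · rw [← LinearMap.toMatrix'_comp, hz, LinearMap.toMatrix'_id]

/-- A matrix of trace `0` or `1` is, up to a left factor projecting along its kernel, the sum of an
idempotent and an anticommutator. -/
lemma exists_lift_anticommutator [CharP F 2] (A : Matrix ι ι F)
    (hA : A.trace = 0 ∨ A.trace = 1) :
    ∃ E Z D S V : Matrix ι ι F, Z * A = E ∧ A * E = A ∧ E * S = S ∧ V * E = V ∧
      D * E = D ∧ D * D = D ∧ D * V = V ∧ S * D = S ∧ E * A = D + S * V + V * S := by
  obtain ⟨r, G, K, H, Z, rfl, hHK, hZG⟩ := exists_rank_factorization A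
  rw [trace_mul_comm] at hA
  obtain ⟨d, s, v, hd, hv, hs, hB⟩ := isIdempotentAddAnticommutator _ hA
  have key (x y : Matrix (Fin r) (Fin r) F) : K * x * H * (K * y * H) = K * (x * y) * H := by
    simp only [Matrix.mul_assoc]
    rw [← Matrix.mul_assoc H K, hHK, Matrix.one_mul]
  have hl (x : Matrix (Fin r) ι F) : K * H * (K * x) = K * x := by
    rw [Matrix.mul_assoc, ← Matrix.mul_assoc H, hHK, Matrix.one_mul]
  have hr (x : Matrix ι (Fin r) F) : x * H * (K * H) = x * H := by
    rw [Matrix.mul_assoc, ← Matrix.mul_assoc H, hHK, Matrix.one_mul]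
  refine ⟨K * H, K * Z, K * d * H, K * s * H, K * v * H, ?_, hr _, ?_, hr _, hr _,
    by rw [key, hd], by rw [key, hv], by rw [key, hs], ?_⟩
  · rw [Matrix.mul_assoc, ← Matrix.mul_assoc Z, hZG, Matrix.one_mul]
  · rw [Matrix.mul_assoc K s, hl]
  · rw [key, key, ← Matrix.add_mul, ← Matrix.mul_add, ← Matrix.add_mul, ← Matrix.mul_add, ← hB]
    simp only [Matrix.mul_assoc]

lemma add_self_eq_zero_of_charTwo {μ ν : Type*} [CharP F 2] (x : Matrix μ ν F) : x + x = 0 := by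
  ext i j
  exact CharTwo.add_self_eq_zero _

/-- `M` is a sum of three idempotent matrices. -/
def IsSumThreeIdempotents (M : Matrix ι ι F) : Prop :=
  ∃ P Q R : Matrix ι ι F, P ^ 2 = P ∧ Q ^ 2 = Q ∧ R ^ 2 = R ∧ M = P + Q + R

lemma IsSumThreeIdempotents.of_conj {M g g' : Matrix ι ι F} (h : g' * g = 1) (h' : g * g' = 1)
    (H : IsSumThreeIdempotents (g * M * g')) : IsSumThreeIdempotents M := by
  obtain ⟨P, Q, R, hP, hQ, hR, hM⟩ := H
  have key {x : Matrix ι ι F} (hx : x ^ 2 = x) : (g' * x * g) ^ 2 = g' * x * g := by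
    rw [mul_mul_pow_of_mul_eq_one _ h' h, hx]
  refine ⟨_, _, _, key hP, key hQ, key hR, ?_⟩
  rw [← add_mul, ← mul_add, ← add_mul, ← mul_add, ← hM]
  simp only [mul_assoc]
  rw [h, ← mul_assoc, h, one_mul, mul_one]

lemma isSumThreeIdempotents_fromBlocks [CharP F 2] {D S V : Matrix ι ι F} (hD : D * D = D)
    (hV : D * V = V) (hS : S * D = S) (X Y : Matrix ι ι F) :
    IsSumThreeIdempotents (fromBlocks (D + V * S) X Y (S * V)) := by
  have h11 : (1 : Matrix ι ι F) + 1 = 0 := add_self_eq_zero_of_charTwo 1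
  refine ⟨fromBlocks 1 (X - V) 0 0, fromBlocks 1 0 (Y - (S + S * V * S)) 0,
    fromBlocks (D + V * S) V (S + S * V * S) (S * V), ?_, ?_, ?_, ?_⟩
  · simp [sq, fromBlocks_multiply]
  · simp [sq, fromBlocks_multiply]
  · have hVS := add_self_eq_zero_of_charTwo (V * S)
    have hVSV := add_self_eq_zero_of_charTwo (V * S * V)
    have hSVS := add_self_eq_zero_of_charTwo (S * V * S)
    have hVSVS := add_self_eq_zero_of_charTwo (V * (S * V * S))
    have hSVSV := add_self_eq_zero_of_charTwo (S * V * (S * V))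
    have hSVSVS := add_self_eq_zero_of_charTwo (S * V * S * V * S)
    have hV' (x : Matrix ι ι F) : D * (V * x) = V * x := by rw [← mul_assoc, hV]
    simp only [mul_assoc] at hVS hVSV hSVS hVSVS hSVSV hSVSVS
    rw [sq, fromBlocks_multiply]
    congr 1 <;> simp only [mul_add, add_mul, mul_assoc, hD, hV, hS, hV']
    · linear_combination (norm := abel) hVS + hVSVS
    · linear_combination (norm := abel) hVSV
    · linear_combination (norm := abel) hSVS + hSVSVS
    · linear_combination (norm := abel) hSVSV
  · simp [fromBlocks_add, h11]

lemma isSumThreeIdempotents_fromBlocks_zero [CharP F 2] (A : Matrix ι ι F)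
    (hA : A.trace = 0 ∨ A.trace = 1) :
    IsSumThreeIdempotents (fromBlocks A 0 0 (0 : Matrix ι ι F)) := by
  obtain ⟨E, Z, D, S, V, hZA, hAE, hES, hVE, hDE, hD, hV, hS, hEA⟩ :=
    exists_lift_anticommutator A hA
  have hEE : E * E = E := by nth_rw 1 [← hZA]; rw [mul_assoc, hAE, hZA]
  let W := A + S * V + E * A
  have hAW : A + W * E = D + V * S := by
    have c1 := add_self_eq_zero_of_charTwo A
    have c2 := add_self_eq_zero_of_charTwo (S * V)
    have : W * E = A + S * V + E * A := by
      simp only [W, add_mul, mul_assoc, hAE, hVE]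
    rw [this, hEA]
    calc _ = (A + A) + (S * V + S * V) + (D + V * S) := by abel
      _ = _ := by rw [c1, c2, zero_add, zero_add]
  have hEW : E * W = S * V := by
    have c1 := add_self_eq_zero_of_charTwo (E * A)
    calc E * W = (E * A + E * A) + S * V := by
          simp only [W, mul_add, ← mul_assoc, hEE, hES]; abel
      _ = S * V := by rw [c1, zero_add]
  have hWW := add_self_eq_zero_of_charTwo W
  have hZZ := add_self_eq_zero_of_charTwo Z
  have hW1 : (fromBlocks 1 W 0 1 : Matrix (ι ⊕ ι) (ι ⊕ ι) F) * fromBlocks 1 W 0 1 = 1 := by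
    simp [fromBlocks_multiply, hWW]
  have hZ1 : (fromBlocks 1 0 Z 1 : Matrix (ι ⊕ ι) (ι ⊕ ι) F) * fromBlocks 1 0 Z 1 = 1 := by
    simp [fromBlocks_multiply, hZZ]
  refine .of_conj hZ1 hZ1 (.of_conj hW1 hW1 ?_)
  have := isSumThreeIdempotents_fromBlocks hD hV hS ((D + V * S) * W) E
  convert this using 1
  simp [fromBlocks_multiply, hZA, hAW, hEW]

end TraceIdempotents

/-- Over a field of characteristic 2, if `A` has trace `0` or `1`, then
`A ⊕ 0ₙ` is the sum of three idempotent matrices. -/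
theorem trace_zero_or_one_oplus_zero_sum_three_idempotents (F : Type*) [Field F]
    [CharP F 2] (n : ℕ) (A : Matrix (Fin n) (Fin n) F)
    (hA : A.trace = 0 ∨ A.trace = 1) :
    ∃ P Q R : Matrix (Fin n ⊕ Fin n) (Fin n ⊕ Fin n) F,
      P ^ 2 = P ∧ Q ^ 2 = Q ∧ R ^ 2 = R ∧
      Matrix.fromBlocks A 0 0 (0 : Matrix (Fin n) (Fin n) F) = P + Q + R :=
  TraceIdempotents.isSumThreeIdempotents_fromBlocks_zero A hA
end

section
/- For every matrix M ∈ Mat_n(F), all the invariant factors of the block matrix D(M) = [[0_n, M], [I_n, 0_n]] ∈ Mat_{2n}(F) are even polynomials (i.e., polynomials in t²). -/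
open Polynomial

/-- The companion matrix of a monic polynomial of degree `n`. -/
def companion {F : Type*} [Field F] (n : ℕ) (p : Polynomial F) :
    Matrix (Fin n) (Fin n) F := fun i j =>
  if (j : ℕ) = n - 1 then -(p.coeff i)
  else if (i : ℕ) = (j : ℕ) + 1 then 1 else 0

/-- `l` is the list of invariant factors of the square matrix `A`: the entries
are monic, each divides the previous one, and `A` is similar to the
block-diagonal direct sum of their companion matrices. -/
def IsInvFactors {F : Type*} [Field F] {m : Type*} [Fintype m] [DecidableEq m]
    (A : Matrix m m F) (l : List (Polynomial F)) : Prop :=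
  (∀ p ∈ l, p.Monic) ∧ l.Chain' (fun a b => b ∣ a) ∧
  ∃ e : m ≃ (Σ i : Fin l.length, Fin ((l.get i).natDegree)),
  ∃ P : (Matrix m m F)ˣ,
    A = (P : Matrix m m F) *
        (Matrix.reindex e.symm e.symm
          (Matrix.blockDiagonal' fun i => companion ((l.get i).natDegree) (l.get i))) *
        ((↑P⁻¹ : Matrix m m F))

/-- A linear map intertwining `D` with multiplication by `u` intertwines `p(D)` with
multiplication by `p(u)`. -/
theorem map_aeval_apply_eq_aeval_mul {F V T : Type*} [Field F] [AddCommGroup V] [Module F V]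
    [CommRing T] [Algebra F T] (D : Module.End F V) (ψ : V →ₗ[F] T) (u : T)
    (h : ∀ v, ψ (D v) = u * ψ v) (p : F[X]) (v : V) :
    ψ (aeval D p v) = aeval u p * ψ v := by
  induction p using Polynomial.induction_on' generalizing v with
  | add p q hp hq => simp [hp, hq, add_mul]
  | monomial n a =>
    have hpow : ∀ n : ℕ, ψ ((D ^ n) v) = u ^ n * ψ v := by
      intro n
      induction n with
      | zero => simp
      | succ n ih => rw [pow_succ', Module.End.mul_apply, h, ih, pow_succ', mul_assoc]
    simp [aeval_monomial, hpow, Algebra.smul_def, mul_assoc, Module.algebraMap_end_apply]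

/-- If `y` kills every determinant built from the vectors `x i`, it kills every determinant
built from linear combinations of them. -/
theorem mul_det_eq_zero_of_forall_rows {T κ ι : Type*} [CommRing T] [Fintype κ] [DecidableEq κ]
    [Fintype ι] (y : T) (x : κ → ι → κ → T)
    (h : ∀ r : κ → ι, y * Matrix.det (Matrix.of fun j => x j (r j)) = 0)
    (c : κ → ι → T) :
    y * Matrix.det (Matrix.of fun j => ∑ i, c j i • x j i) = 0 := by
  classical
  have hsum := (Matrix.detRowAlternating (R := T) (n := κ)).toMultilinearMap.map_sum
    (fun j i => c j i • x j i)
  change Matrix.det (Matrix.of fun j => ∑ i, c j i • x j i) =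
    ∑ r : κ → ι, Matrix.detRowAlternating.toMultilinearMap
      (fun j => c j (r j) • x j (r j)) at hsum
  rw [hsum, Finset.mul_sum]
  refine Finset.sum_eq_zero fun r _ => ?_
  rw [MultilinearMap.map_smul_univ, smul_eq_mul, mul_left_comm]
  exact mul_eq_zero_of_right _ (h r)

/-- If `V` is generated over `F[D]` by vectors `e i` annihilated by `l i`, with each `l i`
dividing the previous ones, then `l k` annihilates every `(k + 1)`-fold determinant of
`F[D]`-linear maps. -/
theorem aeval_mul_det_eq_zero {F V T : Type*} [Field F] [AddCommGroup V] [Module F V]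
    [CommRing T] [Algebra F T] (D : Module.End F V) {N : ℕ} (e : Fin N → V) (l : Fin N → F[X])
    (hdvd : ∀ i j, i ≤ j → l j ∣ l i)
    (hgen : ∀ v, ∃ p : Fin N → F[X], v = ∑ i, aeval D (p i) (e i))
    (hann : ∀ i, aeval D (l i) (e i) = 0) (k : Fin N) (u : T)
    (ψ : Fin (k + 1) → V →ₗ[F] T) (hψ : ∀ i v, ψ i (D v) = u * ψ i v) (v : Fin (k + 1) → V) :
    aeval u (l k) * Matrix.det (Matrix.of fun j i => ψ i (v j)) = 0 := by
  choose p hp using hgen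
  have hrow : (Matrix.of fun j i => ψ i (v j)) =
      Matrix.of fun j => ∑ i, aeval u (p (v j) i) • (fun a => ψ a (e i)) := by
    ext j a
    rw [Matrix.of_apply, Matrix.of_apply]
    conv_lhs => rw [hp (v j)]
    simp [map_aeval_apply_eq_aeval_mul D (ψ a) u (hψ a)]
  rw [hrow]
  refine mul_det_eq_zero_of_forall_rows _ (fun _ i a => ψ a (e i)) (fun r => ?_) _
  by_cases hr : Function.Injective r
  · obtain ⟨j, hj⟩ : ∃ j, k ≤ r j := by
      by_contra! hlt
      have := Fintype.card_le_of_injective (fun j => (⟨r j, hlt j⟩ : Fin k))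
        (fun a b hab => hr (Fin.ext (by simpa using hab)))
      simp at this
    obtain ⟨c, hc⟩ := hdvd _ _ hj
    rw [hc, map_mul, mul_comm (aeval u _), mul_assoc]
    refine mul_eq_zero_of_right _ ?_
    have hzero : ∀ a, aeval u (l (r j)) * ψ a (e (r j)) = 0 := fun a => by
      rw [← map_aeval_apply_eq_aeval_mul D (ψ a) u (hψ a), hann, map_zero]
    have hsmul := Matrix.det_updateRow_smul (Matrix.of fun j a => ψ a (e (r j))) j
      (aeval u (l (r j))) (fun a => ψ a (e (r j)))
    have hself : (Matrix.of fun j a => ψ a (e (r j))).updateRow j (fun a => ψ a (e (r j))) =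
        Matrix.of fun j a => ψ a (e (r j)) := Matrix.updateRow_eq_self _ j
    rw [hself] at hsmul
    rw [← hsmul]
    refine Matrix.det_eq_zero_of_row_eq_zero j fun a => ?_
    rw [Matrix.updateRow_self]
    exact hzero a
  · obtain ⟨a, b, hab, hne⟩ := by simpa [Function.Injective] using hr
    exact mul_eq_zero_of_right _ (Matrix.det_zero_of_row_eq hne (by funext i; simp [hab]))

/-- A polynomial `a(t²) + t b(t²)` that divides `b(t²)` is even. -/
theorem eq_comp_X_sq_of_dvd {F : Type*} [Field F] {p a b : F[X]}
    (hp : p = expand F 2 a + X * expand F 2 b) (hb : p ∣ expand F 2 b) :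
    p = a.comp (X ^ 2) := by
  by_cases h0 : b = 0
  · simpa [h0, expand_eq_comp_X_pow] using hp
  · exfalso
    have hne : expand F 2 b ≠ 0 := (expand_ne_zero two_pos).2 h0
    have hle := natDegree_le_of_dvd hb hne
    rw [natDegree_expand] at hle
    have hcoeff : p.coeff (b.natDegree * 2 + 1) = b.leadingCoeff := by
      rw [hp, coeff_add, coeff_X_mul, coeff_expand_mul two_pos, coeff_expand two_pos,
        if_neg (by omega), zero_add, leadingCoeff]
    have := le_natDegree_of_ne_zero (hcoeff ▸ leadingCoeff_ne_zero.2 h0)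
    omega

theorem exists_eq_expand_add_X_mul_expand {F : Type*} [Field F] (p : F[X]) :
    ∃ a b : F[X], p = expand F 2 a + X * expand F 2 b := by
  induction p using Polynomial.induction_on' with
  | add p q hp hq =>
    obtain ⟨a, b, rfl⟩ := hp
    obtain ⟨c, d, rfl⟩ := hq
    exact ⟨a + c, b + d, by simp only [map_add]; ring⟩
  | monomial n c =>
    obtain ⟨m, rfl | rfl⟩ := n.even_or_odd'
    · exact ⟨monomial m c, 0, by simp [expand_monomial, mul_comm]⟩
    · exact ⟨0, monomial m c, by simp [expand_monomial, X_mul_monomial, mul_comm]⟩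

theorem sum_companion_mulVec_smul_pow {F S : Type*} [Field F] [CommRing S] [Algebra F S]
    {p : F[X]} (hp : p.Monic) (r : S) (hr : aeval r p = 0) (y : Fin p.natDegree → F) :
    ∑ i, (companion p.natDegree p).mulVec y i • r ^ (i : ℕ) =
      r * ∑ j, y j • r ^ (j : ℕ) := by
  have hcol : ∀ j : Fin p.natDegree,
      ∑ i : Fin p.natDegree, companion p.natDegree p i j • r ^ (i : ℕ) = r ^ (j + 1 : ℕ) := by
    intro j
    by_cases hj : (j : ℕ) = p.natDegree - 1
    · have hd : (j : ℕ) + 1 = p.natDegree := by omega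
      rw [aeval_eq_sum_range, Finset.sum_range_succ, hp.coeff_natDegree, one_smul,
        Finset.sum_range] at hr
      simp only [companion, hj, if_true, neg_smul, Finset.sum_neg_distrib]
      rw [← hj, hd]
      exact neg_eq_of_add_eq_zero_right hr
    · rw [Finset.sum_eq_single (⟨j + 1, by omega⟩ : Fin p.natDegree)]
      · simp [companion, hj]
      · intro i _ hi
        have : (i : ℕ) ≠ j + 1 := fun h => hi (Fin.ext h)
        simp [companion, hj, this]
      · simp
  simp only [Matrix.mulVec, dotProduct, Finset.sum_smul, Finset.mul_sum]
  rw [Finset.sum_comm]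
  refine Finset.sum_congr rfl fun j _ => ?_
  rw [mul_smul_comm, ← pow_succ', ← hcol, Finset.smul_sum]
  exact Finset.sum_congr rfl fun i _ => by rw [mul_comm, mul_smul]

/-- A matrix with invariant factors `l` acts as multiplication by `t` on
`⨁ F[t] / (l i)`. -/
theorem IsInvFactors.exists_linearEquiv {F m : Type*} [Field F] [Fintype m] [DecidableEq m]
    {A : Matrix m m F} {l : List F[X]} (h : IsInvFactors A l) :
    ∃ Φ : (m → F) ≃ₗ[F] (∀ i : Fin l.length, AdjoinRoot (l.get i)),
      ∀ v i, Φ (A.mulVec v) i = AdjoinRoot.root (l.get i) * Φ v i := by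
  obtain ⟨hmonic, -, e, P, hA⟩ := h
  have hm : ∀ i, (l.get i).Monic := fun i => hmonic _ (l.get_mem i)
  let Θ : ((Σ i : Fin l.length, Fin (l.get i).natDegree) → F) ≃ₗ[F]
      (∀ i : Fin l.length, AdjoinRoot (l.get i)) :=
    (LinearEquiv.piCurry F (fun (i : Fin l.length) (_ : Fin (l.get i).natDegree) => F)).trans
      (LinearEquiv.piCongrRight fun i => (AdjoinRoot.powerBasis' (hm i)).basis.equivFun.symm)
  have hΘ : ∀ y i, Θ y i = ∑ j, y ⟨i, j⟩ • AdjoinRoot.root (l.get i) ^ (j : ℕ) := by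
    intro y i
    change (AdjoinRoot.powerBasis' (hm i)).basis.equivFun.symm (fun j => y ⟨i, j⟩) = _
    rw [Module.Basis.equivFun_symm_apply]
    exact Finset.sum_congr rfl fun j _ => by
      rw [(AdjoinRoot.powerBasis' (hm i)).basis_eq_pow]; rfl
  let Q : (m → F) ≃ₗ[F] (m → F) := Matrix.toLin'OfInv (Units.mul_inv P) (Units.inv_mul P)
  refine ⟨(Q.trans (LinearEquiv.funCongrLeft F F e.symm)).trans Θ, fun v i => ?_⟩
  have hQ : ∀ v, Q v = (↑P⁻¹ : Matrix m m F).mulVec v := fun v =>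
    Matrix.toLin'_apply _ v
  have hQA : Q (A.mulVec v) ∘ e.symm =
      (Matrix.blockDiagonal' fun i => companion ((l.get i).natDegree) (l.get i)).mulVec
        (Q v ∘ e.symm) := by
    rw [hQ, hQ, hA, Matrix.mulVec_mulVec, mul_assoc, ← mul_assoc, ← mul_assoc, Units.inv_mul,
      one_mul, ← Matrix.mulVec_mulVec, Matrix.reindex_apply, Matrix.submatrix_mulVec_equiv]
    funext x
    simp
  change Θ (Q (A.mulVec v) ∘ e.symm) i = _ * Θ (Q v ∘ e.symm) i
  rw [hQA, hΘ, hΘ, ← sum_companion_mulVec_smul_pow (hm i) _ (by simp)]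
  refine Finset.sum_congr rfl fun j _ => ?_
  congr 1
  simp only [Matrix.mulVec, dotProduct, Fintype.sum_sigma]
  rw [Finset.sum_eq_single i]
  · simp [Matrix.blockDiagonal'_apply_eq]
  · intro i' _ hi'
    exact Finset.sum_eq_zero fun j' _ => by
      rw [Matrix.blockDiagonal'_apply_ne _ _ _ (Ne.symm hi'), zero_mul]
  · simp

/-- The extension of an intertwiner `φ` on `Fⁿ × 0` from `t²` to a square root of `t²`. -/
def quadraticExtension {F S : Type*} [Field F] [CommRing S] [Algebra F S] {n : ℕ}
    (t : S) (φ : (Fin n ⊕ Fin n → F) →ₗ[F] S) :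
    (Fin n ⊕ Fin n → F) →ₗ[F] QuadraticAlgebra S (t ^ 2) 0 where
  toFun v := ⟨φ (Sum.elim (v ∘ Sum.inl) 0), φ (Sum.elim (v ∘ Sum.inr) 0)⟩
  map_add' v w := by
    ext <;> simp only [QuadraticAlgebra.re_add, QuadraticAlgebra.im_add, ← map_add] <;>
      congr 1 <;> funext x <;> cases x <;> simp
  map_smul' c v := by
    ext <;> simp only [QuadraticAlgebra.re_smul, QuadraticAlgebra.im_smul, ← map_smul,
      RingHom.id_apply] <;>
      congr 1 <;> funext x <;> cases x <;> simp

theorem fromBlocks_mulVec_elim {F : Type*} [Field F] {n : ℕ} (M : Matrix (Fin n) (Fin n) F)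
    (u v : Fin n → F) :
    (Matrix.fromBlocks 0 M 1 (0 : Matrix (Fin n) (Fin n) F)).mulVec (Sum.elim u v) =
      Sum.elim (M.mulVec v) u := by
  simp [Matrix.fromBlocks_mulVec]

theorem quadraticExtension_mulVec {F S : Type*} [Field F] [CommRing S] [Algebra F S] {n : ℕ}
    (M : Matrix (Fin n) (Fin n) F) (t : S) (φ : (Fin n ⊕ Fin n → F) →ₗ[F] S)
    (hφ : ∀ v, φ ((Matrix.fromBlocks 0 M 1 0).mulVec v) = t * φ v) (v : Fin n ⊕ Fin n → F) :
    quadraticExtension t φ ((Matrix.fromBlocks 0 M 1 0).mulVec v) =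
      QuadraticAlgebra.omega * quadraticExtension t φ v := by
  obtain ⟨a, b, rfl⟩ : ∃ a b, v = Sum.elim a b :=
    ⟨v ∘ Sum.inl, v ∘ Sum.inr, (Sum.elim_comp_inl_inr v).symm⟩
  have h2 : φ (Sum.elim (M.mulVec b) 0) = t ^ 2 * φ (Sum.elim b 0) := by
    rw [pow_two, mul_assoc, ← hφ, ← hφ, fromBlocks_mulVec_elim, fromBlocks_mulVec_elim,
      Matrix.mulVec_zero]
  rw [fromBlocks_mulVec_elim]
  ext <;> simp [quadraticExtension, h2]

theorem aeval_omega_expand_add {F S : Type*} [Field F] [CommRing S] [Algebra F S] (t : S)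
    (a b : F[X]) :
    aeval (QuadraticAlgebra.omega : QuadraticAlgebra S (t ^ 2) 0)
      (expand F 2 a + X * expand F 2 b) =
      ⟨aeval t (expand F 2 a), aeval t (expand F 2 b)⟩ := by
  have hω : (QuadraticAlgebra.omega : QuadraticAlgebra S (t ^ 2) 0) ^ 2 =
      algebraMap S _ (t ^ 2) := by
    rw [pow_two QuadraticAlgebra.omega, QuadraticAlgebra.omega_mul_omega_eq_algebraMap]; simp
  simp only [map_add, map_mul, aeval_X, expand_aeval, hω, aeval_algebraMap_apply]
  ext <;> simp

/-- If determinants of intertwiners of `[[0, M], [I, 0]]` with values in square-root extensions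
are annihilated by `a(t²) + t b(t²)`, the determinants of the original ones are annihilated
by `b(t²)`. -/
theorem aeval_expand_mul_det_eq_zero {F S : Type*} [Field F] [CommRing S] [Algebra F S] {n : ℕ}
    (M : Matrix (Fin n) (Fin n) F) {κ : Type*} [Fintype κ] [DecidableEq κ] (t : S)
    (φ : κ → (Fin n ⊕ Fin n → F) →ₗ[F] S)
    (hφ : ∀ i v, φ i ((Matrix.fromBlocks 0 M 1 0).mulVec v) = t * φ i v) (a b : F[X])
    (h : ∀ v : κ → (Fin n ⊕ Fin n → F),
      aeval (QuadraticAlgebra.omega : QuadraticAlgebra S (t ^ 2) 0)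
        (expand F 2 a + X * expand F 2 b) *
        Matrix.det (Matrix.of fun j i => quadraticExtension t (φ i) (v j)) = 0)
    (v : κ → (Fin n ⊕ Fin n → F)) :
    aeval t (expand F 2 b) * Matrix.det (Matrix.of fun j i => φ i (v j)) = 0 := by
  have hbase : ∀ w : κ → (Fin n → F),
      aeval t (expand F 2 b) * Matrix.det (Matrix.of fun j i => φ i (Sum.elim (w j) 0)) = 0 := by
    intro w
    have hw := h fun j => Sum.elim (w j) 0
    have hdet : Matrix.det (Matrix.of fun j i => quadraticExtension t (φ i) (Sum.elim (w j) 0)) =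
        algebraMap S (QuadraticAlgebra S (t ^ 2) 0)
          (Matrix.det (Matrix.of fun j i => φ i (Sum.elim (w j) 0))) := by
      rw [RingHom.map_det]
      congr 1
      funext j i
      have h0 : (Sum.elim (0 : Fin n → F) (0 : Fin n → F)) = 0 := Sum.elim_zero_zero
      ext <;> simp [quadraticExtension, h0]
    rw [hdet, aeval_omega_expand_add] at hw
    simpa using congrArg QuadraticAlgebra.im hw
  have hrow : (Matrix.of fun j i => φ i (v j)) = Matrix.of fun j => ∑ s : Fin 2, t ^ (s : ℕ) •
      (fun i => φ i (Sum.elim (![v j ∘ Sum.inl, v j ∘ Sum.inr] s) 0)) := by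
    ext j i
    rw [Matrix.of_apply, Matrix.of_apply]
    have hv : v j = Sum.elim (v j ∘ Sum.inl) 0 +
        (Matrix.fromBlocks 0 M 1 0).mulVec (Sum.elim (v j ∘ Sum.inr) 0) := by
      rw [fromBlocks_mulVec_elim, Matrix.mulVec_zero]
      funext x
      cases x <;> simp
    conv_lhs => rw [hv, map_add, hφ]
    simp
  rw [hrow]
  exact mul_det_eq_zero_of_forall_rows _
    (fun j s i => φ i (Sum.elim (![v j ∘ Sum.inl, v j ∘ Sum.inr] s) 0))
    (fun r => hbase fun j => ![v j ∘ Sum.inl, v j ∘ Sum.inr] (r j)) _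

/-- All invariant factors of the block matrix `[[0, M], [I, 0]]` are even
polynomials, i.e. polynomials in `t²`. -/
theorem invFactors_block_even (F : Type*) [Field F] (n : ℕ)
    (M : Matrix (Fin n) (Fin n) F) (l : List (Polynomial F))
    (hl : IsInvFactors
      (Matrix.fromBlocks 0 M 1 (0 : Matrix (Fin n) (Fin n) F)) l) :
    ∀ p ∈ l, ∃ q : Polynomial F, p = q.comp (X ^ 2) := by
  intro p hp
  obtain ⟨k, rfl⟩ := List.get_of_mem hp
  have hdvd : ∀ i j : Fin l.length, i ≤ j → l.get j ∣ l.get i := by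
    intro i j hij
    rcases hij.eq_or_lt with rfl | hlt
    · exact dvd_rfl
    · have : IsTrans F[X] (fun a b => b ∣ a) := ⟨fun _ _ _ h₁ h₂ => h₂.trans h₁⟩
      exact List.pairwise_iff_get.1 (List.isChain_iff_pairwise.1 hl.2.1) i j hlt
  obtain ⟨Φ, hΦ⟩ := hl.exists_linearEquiv
  obtain ⟨a, b, hab⟩ := exists_eq_expand_add_X_mul_expand (l.get k)
  refine ⟨a, eq_comp_X_sq_of_dvd hab ?_⟩
  let D : Module.End F (Fin n ⊕ Fin n → F) := Matrix.toLin' (Matrix.fromBlocks 0 M 1 0)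
  let e : Fin l.length → (Fin n ⊕ Fin n → F) := fun i => Φ.symm (Pi.single i 1)
  have hΦD : ∀ p v i, Φ (aeval D p v) i = AdjoinRoot.mk (l.get i) p * Φ v i := by
    intro p v i
    rw [← AdjoinRoot.aeval_eq]
    exact map_aeval_apply_eq_aeval_mul D (LinearMap.proj i ∘ₗ Φ.toLinearMap) _
      (fun v => hΦ v i) p v
  have hgen : ∀ v, ∃ p : Fin l.length → F[X], v = ∑ i, aeval D (p i) (e i) := by
    intro v
    choose p hp using fun i => AdjoinRoot.mk_surjective (Φ v i)
    refine ⟨p, Φ.injective ?_⟩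
    funext i
    rw [map_sum, Finset.sum_apply, Finset.sum_eq_single i]
    · rw [hΦD, hp, LinearEquiv.apply_symm_apply, Pi.single_eq_same, mul_one]
    · intro j _ hj
      simp [hΦD, e, Pi.single_eq_of_ne (Ne.symm hj)]
    · simp
  have hann : ∀ i, aeval D (l.get i) (e i) = 0 := by
    intro i
    refine Φ.injective ?_
    funext j
    rw [hΦD, map_zero, Pi.zero_apply]
    by_cases hj : j = i
    · subst hj
      rw [AdjoinRoot.mk_self, zero_mul]
    · simp [e, Pi.single_eq_of_ne hj]
  let ι : Fin (k + 1) → Fin l.length := fun i => ⟨i, by omega⟩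
  have hι : ∀ i, ι i ≤ k := fun i => Nat.lt_succ_iff.1 i.2
  let φ : Fin (k + 1) → (Fin n ⊕ Fin n → F) →ₗ[F] AdjoinRoot (l.get k) := fun i =>
    (AdjoinRoot.algHomOfDvd F _ _ (hdvd _ _ (hι i))).toLinearMap ∘ₗ
      LinearMap.proj (ι i) ∘ₗ Φ.toLinearMap
  have hφ : ∀ i v, φ i ((Matrix.fromBlocks 0 M 1 0).mulVec v) =
      AdjoinRoot.root (l.get k) * φ i v := by
    intro i v
    change AdjoinRoot.algHomOfDvd F _ _ (hdvd _ _ (hι i)) (Φ _ (ι i)) = _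
    rw [hΦ, map_mul, AdjoinRoot.algHomOfDvd_root]
    rfl
  have hdet := aeval_expand_mul_det_eq_zero M _ φ hφ a b
    (fun v => hab ▸ aeval_mul_det_eq_zero D e l.get hdvd hgen hann k _
      (fun i => quadraticExtension _ (φ i)) (fun i v => quadraticExtension_mulVec M _ _ (hφ i) v) v)
    (fun j => e (ι j))
  have hone : (Matrix.of fun j i => φ i (e (ι j))) =
      (1 : Matrix (Fin (k + 1)) (Fin (k + 1)) (AdjoinRoot (l.get k))) := by
    funext j i
    change AdjoinRoot.algHomOfDvd F _ _ (hdvd _ _ (hι i)) (Φ (Φ.symm (Pi.single (ι j) 1)) (ι i)) = _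
    rw [LinearEquiv.apply_symm_apply]
    by_cases hij : j = i
    · subst hij
      simp
    · have : ι i ≠ ι j := fun h => hij (Fin.ext (by simpa [ι] using h.symm))
      rw [Pi.single_eq_of_ne this, map_zero, Matrix.one_apply_ne hij]
  rw [hone, Matrix.det_one, mul_one, AdjoinRoot.aeval_eq, AdjoinRoot.mk_eq_zero] at hdet
  exact hdet
end
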